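/- arXiv:1102.1462 — 2 statements merged into one kernel-verified Lean document; each statement's English description precedes it below -/
import Mathlib

section
/- For every rate R > 0 such that M·2^{−R/M} is not a positive integer, the MMSE outage probability of the flat-fading MIMO channel satisfies liminf_{ρ→∞} log P_out(ρ) / log ρ ≥ −d_out(R,M,N), i.e. P_out(ρ) is exponentially lower bounded by ρ^{−d_out(R,M,N)}. -/
open MeasureTheory ProbabilityTheory Filter Matrix

noncomputable section

/-- Law of a single standard circularly-symmetric complex Gaussian entry, represented as
its pair (re, im) of independent `N(0, 1/2)` real Gaussians. -/
def entryLaw : Measure (ℝ × ℝ) := (gaussianReal 0 (1 / 2)).prod (gaussianReal 0 (1 / 2))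

instance : IsProbabilityMeasure entryLaw := by
  unfold entryLaw; infer_instance

/-- Law of a family of i.i.d. standard complex Gaussian entries indexed by `ι`. -/
def matrixLaw (ι : Type*) [Fintype ι] : Measure (ι → ℝ × ℝ) :=
  Measure.pi fun _ => entryLaw

/-- Turn a pair of reals into a complex number. -/
def toC (p : ℝ × ℝ) : ℂ := ⟨p.1, p.2⟩

/-- The random `N × M` channel matrix `H` with i.i.d. standard complex Gaussian entries. -/
def chan (M N : ℕ) (ω : Fin N × Fin M → ℝ × ℝ) : Matrix (Fin N) (Fin M) ℂ :=
  Matrix.of fun i j => toC (ω (i, j))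

/-- MMSE per-stream SINR: `γ_k(ρ) = 1 / ((I_M + ρ H^* H)⁻¹)_{kk} − 1`. -/
def sinr (M N : ℕ) (ρ : ℝ) (ω : Fin N × Fin M → ℝ × ℝ) (k : Fin M) : ℝ :=
  1 / ((((1 : Matrix (Fin M) (Fin M) ℂ) +
      (ρ : ℂ) • ((chan M N ω)ᴴ * chan M N ω))⁻¹ k k).re) - 1

/-- MMSE outage probability at rate `R` and SNR `ρ`:
`P_out(ρ) = Prob(∑_k log₂(1 + γ_k(ρ)) < R)`. -/
def Pout (M N : ℕ) (R ρ : ℝ) : ℝ :=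
  (matrixLaw (Fin N × Fin M)
    {ω | ∑ k : Fin M, Real.logb 2 (1 + sinr M N ρ ω k) < R}).toReal

/-- `d_out(R,M,N) = ⌈(M·2^{−R/M} − (M−N)⁺)⁺⌉² + |N−M|·⌈(M·2^{−R/M} − (M−N)⁺)⁺⌉`. -/
def dOut (R : ℝ) (M N : ℕ) : ℝ :=
  (⌈max ((M : ℝ) * 2 ^ (-(R / M)) - max ((M : ℝ) - N) 0) 0⌉ : ℝ) ^ 2
    + |(N : ℝ) - M| * (⌈max ((M : ℝ) * 2 ^ (-(R / M)) - max ((M : ℝ) - N) 0) 0⌉ : ℝ)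

/-!
The `k`-th term of the outage sum is `-log₂ aₖ`, where `aₖ = ((1 + ρ HᴴH)⁻¹)ₖₖ`, so outage occurs as
soon as every `aₖ` exceeds `2^{-R/M}`. By Cauchy–Schwarz for the form `1 + ρ HᴴH`, every vector `v`
gives `aₖ ≥ ‖v k‖² / (‖v‖² + ρ ‖H v‖²)`. Hence it is enough that `H` is within a small multiple of
`ρ^{-1/2}` of a matrix whose kernel contains, for each `k`, a vector `v` with
`‖v k‖² / ‖v‖² > 2^{-R/M}` (`inv_diag_gt_of_almost_kernel`).

Let `K` be the least positive integer above `M 2^{-R/M}` that is at least `(M - N)⁺`, and let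
`r = M - K`. If the kernel is the span of `K` columns of the discrete Fourier matrix `U`, the
orthogonal projection onto it has all diagonal entries equal to `K / M > 2^{-R/M}`, and the
projections of the basis vectors are the required `v`. By continuity the same holds for all kernels
close to that one (`exists_kernelVec_bound`). The matrices `[G, G E] Uᴴ`, with `G` of size `N × r`
close to the truncated identity and `E` of size `r × K` small, have such kernels; they form a family
of complex dimension `N r + r K`, hence of codimension `(N - r) K = d_out`.

The probability of the `ρ^{-1/2}`-neighbourhood of this family is bounded below by packing. With
`s = δ ρ^{-1/2}` and `(G, E)` ranging over a grid of mesh `9 s`, the boxes of radius `s` around the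
matrices `[G, G E] Uᴴ` are pairwise disjoint (`lowRank_separated`). There are of order
`s^{-2 (N r + r K)}` of them, and each has Gaussian mass at least of order `s^{2 N M}`
(`matrixLaw_box_lower`), for a total of order `s^{2 (N - r) K}`, that is `ρ^{-d_out}`
(`Pout_lower`).
-/

/-! ### Lower bounds for the MMSE errors -/

section CauchySchwarz

open scoped ComplexOrder

/-- Cauchy–Schwarz for the form `B`, applied to `B⁻¹ e_k` and `v`. -/
lemma normSq_le_inv_diag_mul {m : Type*} [Fintype m] [DecidableEq m]
    {B : Matrix m m ℂ} (hB : B.PosDef) (v : m → ℂ) (k : m) :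
    ‖v k‖ ^ 2 ≤ (B⁻¹ k k).re * (star v ⬝ᵥ B *ᵥ v).re := by
  have hdet : IsUnit B.det := (Matrix.isUnit_iff_isUnit_det B).1 hB.isUnit
  set a : ℂ := B⁻¹ k k with ha
  have ha0 : 0 < a := hB.inv.diag_pos
  obtain ⟨hare, haim⟩ := Complex.pos_iff.1 ha0
  have haR : a = (a.re : ℂ) := Complex.ext rfl haim.symm
  set c : m → ℂ := B⁻¹ *ᵥ Pi.single k 1 with hc
  have hck : c k = a := by simp [hc, ha]
  have hBc : B *ᵥ c = Pi.single k 1 := by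
    rw [hc, Matrix.mulVec_mulVec, Matrix.mul_nonsing_inv _ hdet, Matrix.one_mulVec]
  have hcv : star c ⬝ᵥ B *ᵥ v = v k := by
    rw [Matrix.dotProduct_mulVec, ← hB.1.eq, ← Matrix.star_mulVec, hBc]
    simp
  have hcc : star c ⬝ᵥ B *ᵥ c = a := by
    rw [hBc, dotProduct_single, mul_one, Pi.star_apply, hck, haR]
    simp
  have hvc : star v ⬝ᵥ B *ᵥ c = star (v k) := by
    rw [hBc]; simp
  set b := star v ⬝ᵥ B *ᵥ v with hb
  have h := hB.posSemidef.dotProduct_mulVec_nonneg (a • v - v k • c)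
  have hexp : star (a • v - v k • c) ⬝ᵥ B *ᵥ (a • v - v k • c)
      = (a.re : ℂ) * (a.re * b - ((‖v k‖ ^ 2 : ℝ) : ℂ)) := by
    have hsa : star a = a := by rw [haR]; simp
    have hnorm : star (v k) * v k = ((‖v k‖ ^ 2 : ℝ) : ℂ) := by
      rw [mul_comm]; push_cast; exact Complex.mul_conj' _
    simp only [star_sub, star_smul, Matrix.mulVec_sub, Matrix.mulVec_smul, sub_dotProduct,
      dotProduct_sub, smul_dotProduct, dotProduct_smul, smul_eq_mul, hcv, hcc, hvc, hsa, ← hb]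
    rw [← hnorm, ← haR]
    ring
  rw [hexp] at h
  have h2 := (Complex.le_def.1 h).1
  rw [Complex.re_ofReal_mul, Complex.sub_re, Complex.re_ofReal_mul, Complex.ofReal_re] at h2
  have := nonneg_of_mul_nonneg_right (by simpa using h2) hare
  linarith

/-- If `‖H v‖² ≤ (t / ρ) ‖v‖²`, then the `k`-th MMSE error `((1 + ρ HᴴH)⁻¹)ₖₖ` is at least
`‖v k‖² / ((1 + t) ‖v‖²)`; in particular it exceeds every `q` below this quotient. -/
lemma inv_diag_gt_of_almost_kernel {n m : Type*} [Fintype n] [Fintype m] [DecidableEq m]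
    (H : Matrix n m ℂ) {ρ : ℝ} (hρ : 0 ≤ ρ) (v : m → ℂ) (k : m) {q t : ℝ} (ht : 0 ≤ t)
    (hHv : ρ * ∑ i, ‖(H *ᵥ v) i‖ ^ 2 ≤ t * ∑ j, ‖v j‖ ^ 2)
    (hv : q * ((1 + t) * ∑ j, ‖v j‖ ^ 2) < ‖v k‖ ^ 2) :
    q < (((1 + (ρ : ℂ) • (Hᴴ * H))⁻¹ : Matrix m m ℂ) k k).re := by
  have hB : (1 + (ρ : ℂ) • (Hᴴ * H)).PosDef :=
    Matrix.PosDef.one.add_posSemidef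
      ((Matrix.posSemidef_conjTranspose_mul_self H).smul (by exact_mod_cast hρ))
  have h := normSq_le_inv_diag_mul hB v k
  have hself : ∀ {l : Type _} [Fintype l] (x : l → ℂ), star x ⬝ᵥ x = ((∑ i, ‖x i‖ ^ 2 : ℝ) : ℂ) := by
    intro l _ x
    push_cast
    refine Finset.sum_congr rfl fun i _ => ?_
    exact (mul_comm _ _).trans (Complex.mul_conj' _)
  have hselfn : star (H *ᵥ v) ⬝ᵥ (H *ᵥ v) = ((∑ i, ‖(H *ᵥ v) i‖ ^ 2 : ℝ) : ℂ) := by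
    push_cast
    refine Finset.sum_congr rfl fun i _ => ?_
    exact (mul_comm _ _).trans (Complex.mul_conj' _)
  have hq : star v ⬝ᵥ (1 + (ρ : ℂ) • (Hᴴ * H)) *ᵥ v
      = ((∑ j, ‖v j‖ ^ 2 + ρ * ∑ i, ‖(H *ᵥ v) i‖ ^ 2 : ℝ) : ℂ) := by
    rw [Matrix.add_mulVec, Matrix.one_mulVec, dotProduct_add, hself, Matrix.smul_mulVec,
      dotProduct_smul, ← Matrix.mulVec_mulVec, Matrix.dotProduct_mulVec, ← Matrix.star_mulVec,
      hselfn]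
    push_cast; simp
  rw [hq, Complex.ofReal_re] at h
  have hpos : 0 < (((1 + (ρ : ℂ) • (Hᴴ * H))⁻¹ : Matrix m m ℂ) k k).re :=
    (Complex.pos_iff.1 hB.inv.diag_pos).1
  set a := (((1 + (ρ : ℂ) • (Hᴴ * H))⁻¹ : Matrix m m ℂ) k k).re
  have hS : 0 ≤ ∑ j, ‖v j‖ ^ 2 := by positivity
  set S := ∑ j, ‖v j‖ ^ 2
  have h3 : q * ((1 + t) * S) < a * ((1 + t) * S) := by
    refine hv.trans_le (h.trans ?_)
    gcongr
    linarith
  exact lt_of_mul_lt_mul_right h3 (by positivity)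

end CauchySchwarz

/-! ### Small boxes under the Gaussian law -/

/-- A Gaussian gives mass at least linear in `s` to intervals of radius `s` with bounded centre. -/
lemma gaussian_closedBall_lower (L : ℝ) : ∃ c : ℝ, 0 < c ∧ ∀ x s : ℝ, |x| ≤ L → 0 ≤ s → s ≤ 1 →
    ENNReal.ofReal (c * s) ≤ gaussianReal 0 (1 / 2) (Metric.closedBall x s) := by
  set v : NNReal := 1 / 2 with hv
  have hv0 : v ≠ 0 := by simp [hv]
  have hvp : (0 : ℝ) < v := by positivity
  set c := (√(2 * Real.pi * v))⁻¹ * Real.exp (-(L + 1) ^ 2 / (2 * v)) with hc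
  have hcpos : 0 < c := by positivity
  refine ⟨c * 2, by positivity, fun x s hx hs hs1 => ?_⟩
  rw [gaussianReal_apply 0 hv0]
  calc ENNReal.ofReal (c * 2 * s)
      = ∫⁻ _ in Metric.closedBall x s, ENNReal.ofReal c := by
        rw [setLIntegral_const, Real.volume_closedBall, ← ENNReal.ofReal_mul hcpos.le, mul_assoc]
    _ ≤ _ := by
        refine setLIntegral_mono' Metric.isClosed_closedBall.measurableSet fun y hy => ?_
        rw [gaussianPDF, gaussianPDFReal_def]
        apply ENNReal.ofReal_le_ofReal
        simp only [sub_zero, hc]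
        gcongr ?_ * Real.exp (-?_ / ?_)
        rw [Metric.mem_closedBall, Real.dist_eq] at hy
        rw [← sq_abs y]
        gcongr
        calc |y| = |y - x + x| := by ring_nf
          _ ≤ |y - x| + |x| := abs_add_le _ _
          _ ≤ L + 1 := by linarith

/-- With complex entries, a box of radius `s` around a bounded centre has mass at least of order
`s ^ 2` per entry, with a constant independent of the index type. -/
lemma matrixLaw_box_lower (L : ℝ) : ∃ c : ℝ, 0 < c ∧ ∀ (ι : Type) [Fintype ι]
    (ω₀ : ι → ℝ × ℝ) (s : ℝ), (∀ i, ‖ω₀ i‖ ≤ L) → 0 ≤ s → s ≤ 1 →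
    ENNReal.ofReal ((c * s ^ 2) ^ Fintype.card ι) ≤
      matrixLaw ι (Set.univ.pi fun i => Metric.closedBall (ω₀ i) s) := by
  obtain ⟨c, hc, h⟩ := gaussian_closedBall_lower L
  refine ⟨c ^ 2, by positivity, fun ι _ ω₀ s hω hs hs1 => ?_⟩
  rw [matrixLaw, Measure.pi_pi, ENNReal.ofReal_pow (by positivity), ← Finset.card_univ,
    ← Finset.prod_const]
  refine Finset.prod_le_prod' fun i _ => ?_
  have h12 := max_le_iff.1 (hω i)
  rw [entryLaw, ← Prod.mk.eta (p := ω₀ i), ← closedBall_prod_same, Measure.prod_prod,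
    ← mul_pow, sq, ENNReal.ofReal_mul (by positivity)]
  exact mul_le_mul' (h _ _ h12.1 hs hs1) (h _ _ h12.2 hs hs1)

/-! ### Matrices of low rank with evenly spread kernel -/

/-- The (unnormalised) discrete Fourier matrix: orthogonal columns and unimodular entries. -/
lemma exists_dft (M : ℕ) (hM : M ≠ 0) : ∃ U : Matrix (Fin M) (Fin M) ℂ,
    (∀ j x, ‖U j x‖ = 1) ∧ Uᴴ * U = (M : ℂ) • 1 := by
  set ζ := Complex.exp (2 * Real.pi * Complex.I / M)
  have hζ : IsPrimitiveRoot ζ M := Complex.isPrimitiveRoot_exp M hM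
  have hn : ‖ζ‖ = 1 := hζ.norm'_eq_one hM
  have hζ0 : ζ ≠ 0 := hζ.ne_zero hM
  refine ⟨Matrix.of fun j x => ζ ^ (j.val * x.val), fun j x => by simp [hn], ?_⟩
  ext x y
  set z : ℂ := ζ⁻¹ ^ x.val * ζ ^ y.val with hz
  have hterm : ∀ j : Fin M, star (ζ ^ (j.val * x.val)) * ζ ^ (j.val * y.val) = z ^ j.val := by
    intro j
    rw [star_pow, Complex.star_def, ← Complex.inv_eq_conj hn, hz, mul_pow, ← pow_mul, ← pow_mul,
      mul_comm j.val, mul_comm j.val]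
  have hsum : (∑ j : Fin M, z ^ j.val) = ∑ j ∈ Finset.range M, z ^ j :=
    Fin.sum_univ_eq_sum_range (fun i => z ^ i) M
  rw [Matrix.mul_apply]
  simp only [Matrix.conjTranspose_apply, Matrix.of_apply, hterm, hsum, Matrix.smul_apply,
    smul_eq_mul]
  by_cases hxy : x = y
  · subst hxy
    have : z = 1 := by rw [hz, ← mul_pow, inv_mul_cancel₀ hζ0, one_pow]
    simp [this]
  · rw [Matrix.one_apply_ne hxy, mul_zero]
    have hz1 : z ≠ 1 := by
      intro h
      rw [hz, inv_pow, inv_mul_eq_one₀ (pow_ne_zero _ hζ0)] at h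
      exact hxy (Fin.ext (hζ.pow_inj x.2 y.2 h))
    have hzM : z ^ M = 1 := by
      rw [hz, mul_pow, ← pow_mul, ← pow_mul, mul_comm x.val, mul_comm y.val, pow_mul, pow_mul,
        inv_pow, hζ.pow_eq_one]
      simp
    have := mul_geom_sum z M
    rw [hzM, sub_self] at this
    exact (mul_eq_zero.1 this).resolve_left (sub_ne_zero.2 hz1)

section Kernel

variable {n m r k : Type} [Fintype r] [Fintype k]

/-- The matrix `[G, G E] Uᴴ`, of rank at most `|r|`: in the basis given by the columns of `U`, its
first block of columns is `G` and the remaining columns are the combinations of these prescribed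
by `E`. -/
def lowRank (U : Matrix m (r ⊕ k) ℂ) (G : Matrix n r ℂ) (E : Matrix r k ℂ) : Matrix n m ℂ :=
  Matrix.fromCols G (G * E) * Uᴴ

/-- A vector in the kernel of `lowRank U G E`. For `E = 0` it is the projection of the `k₀`-th
basis vector onto the span of the last columns of `U`, up to a factor. -/
def kernelVec (U : Matrix m (r ⊕ k) ℂ) (k₀ : m) (E : r → k → ℂ) : m → ℂ :=
  U *ᵥ Sum.elim (-(Matrix.of E *ᵥ fun a => star (U k₀ (Sum.inr a)))) fun a => star (U k₀ (Sum.inr a))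

lemma lowRank_mul [Fintype m] [DecidableEq r] [DecidableEq k]
    (U : Matrix m (r ⊕ k) ℂ) (G : Matrix n r ℂ) (E : Matrix r k ℂ) {c : ℂ}
    (hU : Uᴴ * U = c • 1) : lowRank U G E * U = c • Matrix.fromCols G (G * E) := by
  rw [lowRank, Matrix.mul_assoc, hU, Matrix.mul_smul, Matrix.mul_one]

lemma lowRank_mulVec_kernelVec [Fintype m] [DecidableEq r] [DecidableEq k]
    (U : Matrix m (r ⊕ k) ℂ) (G : Matrix n r ℂ) (E : r → k → ℂ) {c : ℂ}
    (hU : Uᴴ * U = c • 1) (k₀ : m) :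
    lowRank U G (Matrix.of E) *ᵥ kernelVec U k₀ E = 0 := by
  rw [kernelVec, Matrix.mulVec_mulVec, lowRank_mul U G _ hU, Matrix.smul_mulVec,
    Matrix.fromCols_mulVec]
  simp [Matrix.mulVec_neg]

lemma norm_lowRank_le (U : Matrix m (r ⊕ k) ℂ) (hU1 : ∀ j x, ‖U j x‖ = 1) (G : Matrix n r ℂ)
    (E : r → k → ℂ) (hG : ∀ i l, ‖G i l‖ ≤ 2) (hE : ∀ l a, ‖E l a‖ ≤ 1) (i : n) (j : m) :
    ‖lowRank U G (Matrix.of E) i j‖ ≤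
      Fintype.card (r ⊕ k) * (2 + 2 * Fintype.card r) := by
  rw [lowRank, Matrix.mul_apply, ← nsmul_eq_mul]
  refine (norm_sum_le _ _).trans ((Finset.sum_le_card_nsmul _ _ _ fun x _ => ?_).trans_eq rfl)
  rw [norm_mul, Matrix.conjTranspose_apply, norm_star, hU1, mul_one]
  have h0 : (0 : ℝ) ≤ Fintype.card r := by positivity
  cases x with
  | inl l => rw [Matrix.fromCols_apply_inl]; linarith [hG i l]
  | inr a =>
    rw [Matrix.fromCols_apply_inr, Matrix.mul_apply]
    have : ‖∑ l, G i l * Matrix.of E l a‖ ≤ Fintype.card r • (2 : ℝ) := by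
      refine (norm_sum_le _ _).trans ((Finset.sum_le_card_nsmul _ _ _ fun l _ => ?_).trans_eq rfl)
      rw [norm_mul, Matrix.of_apply, ← mul_one (2 : ℝ)]
      exact mul_le_mul (hG i l) (hE l a) (norm_nonneg _) zero_le_two
    rw [nsmul_eq_mul] at this
    linarith

/-- The vectors `kernelVec` stay favourable for small `E`; for `E = 0` the quotient
`‖v k₀‖² / ‖v‖²` equals `|k| / |m|`, and the general case follows by continuity. -/
lemma exists_kernelVec_bound [Fintype m] [DecidableEq r] [DecidableEq k]
    (U : Matrix m (r ⊕ k) ℂ) (hU1 : ∀ j x, ‖U j x‖ = 1)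
    (hU : Uᴴ * U = (Fintype.card m : ℂ) • 1) (hk : 0 < Fintype.card k) {q : ℝ}
    (hq : q * Fintype.card m < Fintype.card k) :
    ∃ η t : ℝ, 0 < η ∧ 0 < t ∧ ∀ E : r → k → ℂ, (∀ l a, ‖E l a‖ ≤ η) → ∀ k₀ : m,
      q * ((1 + t) * ∑ j, ‖kernelVec U k₀ E j‖ ^ 2) < ‖kernelVec U k₀ E k₀‖ ^ 2 := by
  have hcont : ∀ k₀ : m, Continuous (kernelVec U k₀) := by
    intro k₀
    unfold kernelVec
    refine Continuous.matrix_mulVec continuous_const (continuous_pi fun x => ?_)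
    cases x with
    | inl l =>
      have h : Continuous fun E : r → k → ℂ =>
          -(Matrix.of E *ᵥ fun a => star (U k₀ (Sum.inr a))) :=
        (Continuous.matrix_mulVec continuous_id continuous_const).neg
      exact (continuous_apply l).comp h
    | inr a => exact continuous_const
  have hev : ∀ᶠ p : (r → k → ℂ) × ℝ in nhds (0, 0), ∀ k₀ : m,
      q * ((1 + p.2) * ∑ j, ‖kernelVec U k₀ p.1 j‖ ^ 2) < ‖kernelVec U k₀ p.1 k₀‖ ^ 2 := by
    rw [Filter.eventually_all]
    intro k₀
    have hc' : ∀ j, Continuous fun p : (r → k → ℂ) × ℝ => kernelVec U k₀ p.1 j := fun j =>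
      (continuous_apply j).comp ((hcont k₀).comp continuous_fst)
    refine ContinuousAt.eventually_lt (Continuous.continuousAt ?_) (Continuous.continuousAt ?_) ?_
    · fun_prop
    · fun_prop
    set x : r ⊕ k → ℂ := Sum.elim 0 fun a => star (U k₀ (Sum.inr a)) with hx
    have hv : kernelVec U k₀ (0 : r → k → ℂ) = U *ᵥ x := by
      have : Matrix.of (0 : r → k → ℂ) = 0 := rfl
      simp [kernelVec, this, hx]
    have hself : ∀ {l : Type} [Fintype l] (x : l → ℂ),
        star x ⬝ᵥ x = ((∑ i, ‖x i‖ ^ 2 : ℝ) : ℂ) := by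
      intro l _ x
      push_cast
      refine Finset.sum_congr rfl fun i _ => ?_
      exact (mul_comm _ _).trans (Complex.mul_conj' _)
    have hvk : (U *ᵥ x) k₀ = Fintype.card k := by
      simp only [Matrix.mulVec, dotProduct, Fintype.sum_sum_type, hx, Sum.elim_inl, Sum.elim_inr,
        Pi.zero_apply, mul_zero, Finset.sum_const_zero, zero_add]
      have : ∀ a : k, U k₀ (Sum.inr a) * star (U k₀ (Sum.inr a)) = 1 := fun a => by
        have := Complex.mul_conj' (U k₀ (Sum.inr a))
        rw [hU1] at this
        simpa using this
      rw [Finset.sum_congr rfl fun a _ => this a]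
      simp
    have hvs : ∑ j, ‖(U *ᵥ x) j‖ ^ 2 = Fintype.card m * Fintype.card k := by
      have h1 : star (U *ᵥ x) ⬝ᵥ (U *ᵥ x) = (Fintype.card m : ℂ) * (star x ⬝ᵥ x) := by
        rw [Matrix.star_mulVec, ← Matrix.dotProduct_mulVec, Matrix.mulVec_mulVec, hU,
          Matrix.smul_mulVec, Matrix.one_mulVec, dotProduct_smul, smul_eq_mul]
      rw [hself, hself] at h1
      have h2 : ∑ i, ‖x i‖ ^ 2 = (Fintype.card k : ℝ) := by
        simp [Fintype.sum_sum_type, hx, hU1]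
      rw [h2] at h1
      exact_mod_cast h1
    simp only [hv, hvk, hvs]
    have : (0 : ℝ) < Fintype.card k := by exact_mod_cast hk
    simp only [add_zero, one_mul, Complex.norm_natCast]
    nlinarith
  obtain ⟨ε, hε, h⟩ := Metric.eventually_nhds_iff.1 hev
  refine ⟨ε / 2, ε / 2, by positivity, by positivity, fun E hE k₀ => ?_⟩
  refine h (y := (E, ε / 2)) ?_ k₀
  rw [Prod.dist_eq, max_lt_iff]
  constructor
  · rw [dist_zero_right]
    refine lt_of_le_of_lt ?_ (half_lt_self hε)
    refine (pi_norm_le_iff_of_nonneg (by positivity)).2 fun l =>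
      (pi_norm_le_iff_of_nonneg (by positivity)).2 fun a => hE l a
  · rw [dist_zero_right, Real.norm_of_nonneg (by positivity)]
    exact half_lt_self hε

lemma sum_normSq_mulVec_le [Fintype n] [Fintype m]
    {H C : Matrix n m ℂ} {s : ℝ} (hs : ∀ i j, ‖H i j - C i j‖ ≤ 2 * s)
    {v : m → ℂ} (hC : C *ᵥ v = 0) :
    ∑ i, ‖(H *ᵥ v) i‖ ^ 2 ≤
      4 * s ^ 2 * Fintype.card n * Fintype.card m * ∑ j, ‖v j‖ ^ 2 := by
  have h1 : H *ᵥ v = (H - C) *ᵥ v := by rw [Matrix.sub_mulVec, hC, sub_zero]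
  have h2 : ∀ i, ‖(H *ᵥ v) i‖ ^ 2 ≤ 4 * s ^ 2 * Fintype.card m * ∑ j, ‖v j‖ ^ 2 := by
    intro i
    have h3 : ‖(H *ᵥ v) i‖ ≤ 2 * s * ∑ j, ‖v j‖ := by
      rw [h1, Matrix.mulVec, dotProduct, Finset.mul_sum]
      refine (norm_sum_le _ _).trans (Finset.sum_le_sum fun j _ => ?_)
      rw [norm_mul]
      exact mul_le_mul_of_nonneg_right (hs i j) (norm_nonneg _)
    calc ‖(H *ᵥ v) i‖ ^ 2 ≤ (2 * s * ∑ j, ‖v j‖) ^ 2 := by gcongr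
      _ = 4 * s ^ 2 * (∑ j, ‖v j‖) ^ 2 := by ring
      _ ≤ 4 * s ^ 2 * (Fintype.card m * ∑ j, ‖v j‖ ^ 2) := by
          gcongr
          exact sq_sum_le_card_mul_sum_sq
      _ = _ := by ring
  refine (Finset.sum_le_card_nsmul _ _ _ fun i _ => h2 i).trans_eq ?_
  rw [nsmul_eq_mul, Finset.card_univ]; ring

/-- `(G, E)` can be recovered stably from `lowRank U G E`: `G` is read off after multiplying by
`U`, and `E` is then found from the rows `ι` of `G`, which form a diagonally dominant block. -/
lemma lowRank_separated [Fintype m] [DecidableEq r] [DecidableEq k]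
    (U : Matrix m (r ⊕ k) ℂ) (hU1 : ∀ j x, ‖U j x‖ = 1)
    (hU : Uᴴ * U = (Fintype.card m : ℂ) • 1) (hm : 0 < Fintype.card m) {G G' : Matrix n r ℂ}
    {E E' : r → k → ℂ} {s : ℝ} (hs0 : 0 ≤ s)
    (hs : ∀ i j, ‖lowRank U G (Matrix.of E) i j - lowRank U G' (Matrix.of E') i j‖ ≤ 4 * s) :
    (∀ i l, ‖G i l - G' i l‖ ≤ 4 * s) ∧
    ∀ (ι : r → n) (η : ℝ), Fintype.card r * η ≤ 1 / 2 →
      (∀ l l', ‖G (ι l) l' - (1 : Matrix r r ℂ) l l'‖ ≤ η) → G = G' →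
      ∀ l a, ‖E l a - E' l a‖ ≤ 8 * s := by
  have hmR : (0 : ℝ) < Fintype.card m := by exact_mod_cast hm
  have key : ∀ i x, ‖Matrix.fromCols G (G * Matrix.of E) i x
      - Matrix.fromCols G' (G' * Matrix.of E') i x‖ ≤ 4 * s := by
    intro i x
    have h1 : ((lowRank U G (Matrix.of E) - lowRank U G' (Matrix.of E')) * U) i x
        = (Fintype.card m : ℂ) * (Matrix.fromCols G (G * Matrix.of E) i x
          - Matrix.fromCols G' (G' * Matrix.of E') i x) := by
      rw [Matrix.sub_mul, lowRank_mul _ _ _ hU, lowRank_mul _ _ _ hU, ← smul_sub]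
      rfl
    have h2 : ‖((lowRank U G (Matrix.of E) - lowRank U G' (Matrix.of E')) * U) i x‖
        ≤ Fintype.card m * (4 * s) := by
      rw [Matrix.mul_apply, ← nsmul_eq_mul]
      refine (norm_sum_le _ _).trans ((Finset.sum_le_card_nsmul _ _ _ fun j _ => ?_).trans_eq rfl)
      rw [norm_mul, hU1, mul_one]
      exact hs i j
    rw [h1, norm_mul, Complex.norm_natCast] at h2
    exact le_of_mul_le_mul_left h2 hmR
  refine ⟨fun i l => by simpa using key i (Sum.inl l), fun ι η hη hG hGG l a => ?_⟩
  subst hGG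
  set X : r → k → ℂ := fun l a => E l a - E' l a with hX
  have hbound : ∀ l a, ‖X l a‖ ≤ 4 * s + 1 / 2 * ‖X‖ := by
    intro l a
    have h1 := key (ι l) (Sum.inr a)
    rw [Matrix.fromCols_apply_inr, Matrix.fromCols_apply_inr, Matrix.mul_apply, Matrix.mul_apply,
      ← Finset.sum_sub_distrib] at h1
    have h2 : X l a = (∑ l', (G (ι l) l' * Matrix.of E l' a - G (ι l) l' * Matrix.of E' l' a))
        - ∑ l', (G (ι l) l' - (1 : Matrix r r ℂ) l l') * X l' a := by
      rw [← Finset.sum_sub_distrib]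
      have : ∀ l', G (ι l) l' * Matrix.of E l' a - G (ι l) l' * Matrix.of E' l' a
          - (G (ι l) l' - (1 : Matrix r r ℂ) l l') * X l' a
          = (1 : Matrix r r ℂ) l l' * X l' a := by
        intro l'; simp only [hX, Matrix.of_apply]; ring
      rw [Finset.sum_congr rfl fun l' _ => this l']
      simp [Matrix.one_apply]
    have h3 : ‖∑ l', (G (ι l) l' - (1 : Matrix r r ℂ) l l') * X l' a‖ ≤ 1 / 2 * ‖X‖ := by
      calc _ ≤ Fintype.card r • (η * ‖X‖) := by
            refine (norm_sum_le _ _).trans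
              ((Finset.sum_le_card_nsmul _ _ _ fun l' _ => ?_).trans_eq rfl)
            rw [norm_mul]
            have h4 : ‖X l' a‖ ≤ ‖X‖ := (norm_le_pi_norm (X l') a).trans (norm_le_pi_norm X l')
            exact mul_le_mul (hG l l') h4 (norm_nonneg _) ((norm_nonneg _).trans (hG l l'))
        _ = Fintype.card r * η * ‖X‖ := by rw [nsmul_eq_mul]; ring
        _ ≤ _ := by gcongr
    rw [h2]
    exact (norm_sub_le _ _).trans (add_le_add h1 h3)
  have hXn : ‖X‖ ≤ 4 * s + 1 / 2 * ‖X‖ :=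
    (pi_norm_le_iff_of_nonneg (by positivity)).2 fun l =>
      (pi_norm_le_iff_of_nonneg (by positivity)).2 fun a => hbound l a
  have := hbound l a
  simp only [hX] at this
  linarith

end Kernel

/-! ### Grids and the outage event -/

/-- The point of the square grid of mesh `τ` in the complex plane with coordinates `x`. -/
def gridVal (τ : ℝ) {n₀ : ℕ} (x : Fin n₀ × Fin n₀) : ℂ := ⟨τ * (x.1 : ℕ), τ * (x.2 : ℕ)⟩

lemma gridVal_inj {τ : ℝ} (hτ : 0 < τ) {n₀ : ℕ} {x y : Fin n₀ × Fin n₀}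
    (h : ‖gridVal τ x - gridVal τ y‖ < τ) : x = y := by
  have aux : ∀ a b : Fin n₀, |τ * ((a : ℕ) : ℝ) - τ * ((b : ℕ) : ℝ)| < τ → a = b := by
    intro a b hab
    rw [← mul_sub, abs_mul, abs_of_pos hτ] at hab
    have h1 : |((a : ℕ) : ℝ) - ((b : ℕ) : ℝ)| < 1 := by
      by_contra hcon
      nlinarith
    have h2 : |((a : ℕ) : ℤ) - ((b : ℕ) : ℤ)| < 1 := by exact_mod_cast h1
    rw [Int.abs_lt_one_iff] at h2
    exact Fin.ext (by omega)
  exact Prod.ext (aux _ _ ((Complex.abs_re_le_norm _).trans_lt h))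
    (aux _ _ ((Complex.abs_im_le_norm _).trans_lt h))

lemma norm_gridVal_le {τ η : ℝ} (hτ : 0 ≤ τ) {n₀ : ℕ} (h : τ * n₀ ≤ η / 2)
    (x : Fin n₀ × Fin n₀) : ‖gridVal τ x‖ ≤ η := by
  have aux : ∀ a : Fin n₀, |τ * ((a : ℕ) : ℝ)| ≤ η / 2 := by
    intro a
    rw [abs_of_nonneg (by positivity)]
    refine le_trans ?_ h
    have : ((a : ℕ) : ℝ) ≤ n₀ := by exact_mod_cast a.2.le
    gcongr
  have := Complex.norm_le_abs_re_add_abs_im (gridVal τ x)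
  have h1 := aux x.1
  have h2 := aux x.2
  simp only [gridVal] at this ⊢
  linarith

/-- If every MMSE error exceeds `2^{-R/M}`, the channel is in outage at rate `R`. -/
lemma sum_logb_sinr_lt {M N : ℕ} (hM : 0 < M) {R ρ : ℝ} {ω : Fin N × Fin M → ℝ × ℝ}
    (h : ∀ k, (2 : ℝ) ^ (-(R / M)) < (((1 : Matrix (Fin M) (Fin M) ℂ) +
      (ρ : ℂ) • ((chan M N ω)ᴴ * chan M N ω))⁻¹ k k).re) :
    ∑ k : Fin M, Real.logb 2 (1 + sinr M N ρ ω k) < R := by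
  have hne : (Finset.univ : Finset (Fin M)).Nonempty := ⟨⟨0, hM⟩, Finset.mem_univ _⟩
  have hMR : (0 : ℝ) < M := by exact_mod_cast hM
  calc ∑ k : Fin M, Real.logb 2 (1 + sinr M N ρ ω k)
      < ∑ _k : Fin M, R / M := by
        refine Finset.sum_lt_sum_of_nonempty hne fun k _ => ?_
        have hk := h k
        have hpos := (Real.rpow_pos_of_pos two_pos (-(R / M))).trans hk
        rw [sinr, add_sub_cancel, one_div, Real.logb_inv, neg_lt,
          Real.lt_logb_iff_rpow_lt one_lt_two hpos]
        exact hk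
    _ = R := by
        rw [Finset.sum_const, Finset.card_univ, Fintype.card_fin, nsmul_eq_mul]
        field_simp

instance (ι : Type*) [Fintype ι] : IsProbabilityMeasure (matrixLaw ι) := by
  unfold matrixLaw; infer_instance

/-- If a channel of rank `r` with evenly spread kernel is in outage, i.e. `2^{-R/M} < K / M` with
`M = r + K` columns, then `Pout` decays no faster than `ρ^{-N' K}`. Here the channel has `r + N'`
rows, and `N' K` is the complex codimension of the matrices of rank at most `r`. -/
lemma Pout_lower (r N' K : ℕ) (hK : 0 < K) (R : ℝ)
    (hq : (2 : ℝ) ^ (-(R / (r + K : ℕ))) * (r + K : ℕ) < K) :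
    ∃ c : ℝ, 0 < c ∧ ∀ ρ : ℝ, 1 ≤ ρ → c / ρ ^ (N' * K) ≤ Pout (r + K) (r + N') R ρ := by
  have hM : 0 < r + K := by omega
  obtain ⟨U₀, hU₀1, hU₀⟩ := exists_dft (r + K) hM.ne'
  set U : Matrix (Fin (r + K)) (Fin r ⊕ Fin K) ℂ := U₀.submatrix id finSumFinEquiv with hUdef
  have hU1 : ∀ j x, ‖U j x‖ = 1 := fun j x => hU₀1 j _
  have hU : Uᴴ * U = (Fintype.card (Fin (r + K)) : ℂ) • 1 := by
    ext x y
    have h := congrFun₂ hU₀ (finSumFinEquiv x) (finSumFinEquiv y)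
    rw [Matrix.smul_apply, Matrix.one_apply] at h ⊢
    simp only [EmbeddingLike.apply_eq_iff_eq] at h
    rw [Fintype.card_fin]
    exact h
  obtain ⟨η₀, t, hη₀, ht, hker⟩ := exists_kernelVec_bound U hU1 hU (by simpa using hK)
    (q := (2 : ℝ) ^ (-(R / (r + K : ℕ)))) (by simpa only [Fintype.card_fin] using hq)
  -- `η` bounds the perturbations of `G` and `E`; `r η ≤ 1/2` gives diagonal dominance.
  set η : ℝ := min η₀ (1 / (2 * (r + 1))) with hη
  have hηpos : 0 < η := lt_min hη₀ (by positivity)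
  have hηr : (r : ℝ) * η ≤ 1 / 2 := by
    calc (r : ℝ) * η ≤ r * (1 / (2 * (r + 1))) := by gcongr; exact min_le_right _ _
      _ ≤ 1 / 2 := by
        rw [mul_one_div, div_le_div_iff₀ (by positivity) (by positivity)]; linarith
  have hη1 : η ≤ 1 := by
    refine (min_le_right _ _).trans ?_
    rw [div_le_one (by positivity)]
    have : (0 : ℝ) ≤ r := by positivity
    linarith
  obtain ⟨c, hc, hbox⟩ := matrixLaw_box_lower
    (Fintype.card (Fin r ⊕ Fin K) * (2 + 2 * Fintype.card (Fin r)))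
  -- The boxes have radius `s = δ / √ρ`: `δ² W ≤ t` keeps `ρ ‖H v‖²` below `t ‖v‖²`, and
  -- `δ ≤ η / 18` makes the grid of mesh `9 s` in a square of side `η / 2` non-empty.
  set W : ℝ := 4 * (r + N' : ℕ) * (r + K : ℕ) with hW
  have hW0 : 0 ≤ W := by positivity
  set δ : ℝ := min 1 (min (η / 18) (t / (W + 1))) with hδ
  have hδpos : 0 < δ := by positivity
  have hδ1 : δ ≤ 1 := min_le_left _ _
  have hδη : δ ≤ η / 18 := (min_le_right _ _).trans (min_le_left _ _)
  have hδt : δ ^ 2 * W ≤ t := by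
    have h1 : δ ≤ t / (W + 1) := (min_le_right _ _).trans (min_le_right _ _)
    rw [le_div_iff₀ (by positivity)] at h1
    nlinarith [mul_nonneg hδpos.le hW0, mul_nonneg (mul_nonneg hδpos.le hW0) (sub_nonneg.2 hδ1)]
  -- The number of complex parameters in `(G, E)`, i.e. the dimension of the rank-`r` matrices.
  set A : ℕ := (r + N') * r + r * K with hA
  refine ⟨((η / 36) ^ 2) ^ A * c ^ ((r + N') * (r + K)) * (δ ^ 2) ^ (N' * K), by positivity,
    fun ρ hρ => ?_⟩
  have hρ0 : 0 < ρ := by linarith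
  set s : ℝ := δ / √ρ with hs
  have hspos : 0 < s := by positivity
  have hsδ : s ≤ δ := div_le_self hδpos.le (by rw [Real.one_le_sqrt]; exact hρ)
  have hs2 : s ^ 2 = δ ^ 2 / ρ := by rw [hs, div_pow, Real.sq_sqrt hρ0.le]
  set n₀ : ℕ := ⌊η / (18 * s)⌋₊ with hn₀
  have hn₀up : 9 * s * n₀ ≤ η / 2 := by
    have h1 : (n₀ : ℝ) ≤ η / (18 * s) := Nat.floor_le (by positivity)
    calc 9 * s * n₀ ≤ 9 * s * (η / (18 * s)) := by gcongr
      _ = η / 2 := by field_simp; norm_num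
  have hn₀low : η / 36 / s ≤ n₀ := by
    have h1 : 1 ≤ η / (18 * s) := by
      rw [le_div_iff₀ (by positivity)]; linarith
    have h2 : (1 : ℝ) ≤ n₀ := by exact_mod_cast Nat.one_le_floor_iff _ |>.2 h1
    have h3 : η / (18 * s) < n₀ + 1 := Nat.lt_floor_add_one _
    have h4 : η / 36 / s = η / (18 * s) / 2 := by field_simp; norm_num
    linarith
  let I := (Fin (r + N') × Fin r) ⊕ (Fin r × Fin K)
  let Gf : (I → Fin n₀ × Fin n₀) → Matrix (Fin (r + N')) (Fin r) ℂ := fun p => Matrix.of fun i l =>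
    (if i = Fin.castAdd N' l then 1 else 0) + gridVal (9 * s) (p (Sum.inl (i, l)))
  let Ef : (I → Fin n₀ × Fin n₀) → Fin r → Fin K → ℂ := fun p l a =>
    gridVal (9 * s) (p (Sum.inr (l, a)))
  let C : (I → Fin n₀ × Fin n₀) → Matrix (Fin (r + N')) (Fin (r + K)) ℂ := fun p =>
    lowRank U (Gf p) (Matrix.of (Ef p))
  have hgrid : ∀ x : Fin n₀ × Fin n₀, ‖gridVal (9 * s) x‖ ≤ η :=
    norm_gridVal_le (by positivity) hn₀up
  have hGf : ∀ p i l, ‖Gf p i l‖ ≤ 2 := by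
    intro p i l
    have h1 : ‖(if i = Fin.castAdd N' l then 1 else 0 : ℂ)‖ ≤ 1 := by split_ifs <;> simp
    have h2 := hgrid (p (Sum.inl (i, l)))
    refine (norm_add_le _ _).trans ?_
    linarith
  have hEf : ∀ p l a, ‖Ef p l a‖ ≤ η := fun p l a => hgrid _
  let ω₀ : (I → Fin n₀ × Fin n₀) → Fin (r + N') × Fin (r + K) → ℝ × ℝ := fun p ij =>
    ((C p ij.1 ij.2).re, (C p ij.1 ij.2).im)
  let Box : (I → Fin n₀ × Fin n₀) → Set (Fin (r + N') × Fin (r + K) → ℝ × ℝ) := fun p =>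
    Set.univ.pi fun ij => Metric.closedBall (ω₀ p ij) s
  have hnear : ∀ p, ∀ ω ∈ Box p, ∀ i j,
      ‖chan (r + K) (r + N') ω i j - C p i j‖ ≤ 2 * s := by
    intro p ω hω i j
    have h1 := hω (i, j) (Set.mem_univ _)
    rw [Metric.mem_closedBall, Prod.dist_eq, max_le_iff, Real.dist_eq, Real.dist_eq] at h1
    refine (Complex.norm_le_abs_re_add_abs_im _).trans ?_
    calc _ ≤ s + s := add_le_add h1.1 h1.2
      _ = 2 * s := by ring
  have hsub : ∀ p, Box p ⊆
      {ω | ∑ k : Fin (r + K), Real.logb 2 (1 + sinr (r + K) (r + N') ρ ω k) < R} := by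
    intro p ω hω
    refine sum_logb_sinr_lt hM fun k => ?_
    refine inv_diag_gt_of_almost_kernel _ hρ0.le (kernelVec U k (Ef p)) k ht.le ?_
      (hker (Ef p) (fun l a => (hEf p l a).trans (min_le_left _ _)) k)
    have h1 := sum_normSq_mulVec_le (hnear p ω hω) (lowRank_mulVec_kernelVec U (Gf p) (Ef p) hU k)
    refine (mul_le_mul_of_nonneg_left h1 hρ0.le).trans ?_
    rw [hs2, Fintype.card_fin, Fintype.card_fin, ← mul_assoc]
    refine mul_le_mul_of_nonneg_right ?_ (by positivity)
    refine le_trans (le_of_eq ?_) hδt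
    rw [hW]
    field_simp
  have hdisj : Pairwise (Function.onFun Disjoint Box) := by
    intro p p' hpp
    rw [Function.onFun, Set.disjoint_left]
    intro ω hω hω'
    apply hpp
    -- A common point of two boxes forces the centres within `4 s`, hence the parameters within
    -- `8 s`, less than the mesh `9 s`.
    have hclose : ∀ i j, ‖C p i j - C p' i j‖ ≤ 4 * s := by
      intro i j
      have h1 := hnear p ω hω i j
      have h2 := hnear p' ω hω' i j
      rw [norm_sub_rev] at h1
      have := norm_add_le (C p i j - chan (r + K) (r + N') ω i j)
        (chan (r + K) (r + N') ω i j - C p' i j)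
      rw [sub_add_sub_cancel] at this
      linarith
    obtain ⟨hG, hE⟩ := lowRank_separated U hU1 hU (by simpa using hM) hspos.le hclose
    have hpl : ∀ i l, p (Sum.inl (i, l)) = p' (Sum.inl (i, l)) := by
      intro i l
      refine gridVal_inj (τ := 9 * s) (by positivity) ?_
      have h1 := hG i l
      simp only [Gf, Matrix.of_apply, add_sub_add_left_eq_sub] at h1
      linarith
    have hGG : Gf p = Gf p' := by
      ext i l
      simp only [Gf, Matrix.of_apply, hpl]
    have hE' := hE (Fin.castAdd N') η (by simpa using hηr) (by
      intro l l'
      simp only [Gf, Matrix.of_apply, Matrix.one_apply, Fin.castAdd_inj]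
      rw [add_sub_cancel_left]
      exact hgrid _) hGG
    funext x
    rcases x with ⟨i, l⟩ | ⟨l, a⟩
    · exact hpl i l
    · refine gridVal_inj (τ := 9 * s) (by positivity) ?_
      have h1 := hE' l a
      simp only [Ef] at h1
      linarith
  have hmeas : ∀ p, MeasurableSet (Box p) := fun p =>
    MeasurableSet.univ_pi fun _ => Metric.isClosed_closedBall.measurableSet
  have hω₀ : ∀ p ij, ‖ω₀ p ij‖ ≤
      Fintype.card (Fin r ⊕ Fin K) * (2 + 2 * Fintype.card (Fin r)) := by
    intro p ij
    refine le_trans ?_ (norm_lowRank_le U hU1 (Gf p) (Ef p) (hGf p)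
      (fun l a => (hEf p l a).trans hη1) ij.1 ij.2)
    exact max_le (Complex.abs_re_le_norm _) (Complex.abs_im_le_norm _)
  have hcardI : Fintype.card I = A := by simp [I, hA]
  rw [Pout, ← ENNReal.ofReal_le_iff_le_toReal (measure_ne_top _ _)]
  calc ENNReal.ofReal (((η / 36) ^ 2) ^ A * c ^ ((r + N') * (r + K)) * (δ ^ 2) ^ (N' * K)
        / ρ ^ (N' * K))
      ≤ ENNReal.ofReal (((n₀ * n₀) ^ A : ℕ) * (c * s ^ 2) ^ ((r + N') * (r + K))) := by
        apply ENNReal.ofReal_le_ofReal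
        have hexp : (r + N') * (r + K) = A + N' * K := by rw [hA]; ring
        have hs2pos : 0 < s ^ 2 := by positivity
        calc ((η / 36) ^ 2) ^ A * c ^ ((r + N') * (r + K)) * (δ ^ 2) ^ (N' * K) / ρ ^ (N' * K)
            = ((η / 36) ^ 2) ^ A * c ^ ((r + N') * (r + K)) * (s ^ 2) ^ (N' * K) := by
              rw [hs2, div_pow (δ ^ 2) ρ, mul_div_assoc]
          _ = ((η / 36 / s) * (η / 36 / s)) ^ A * (c * s ^ 2) ^ ((r + N') * (r + K)) := by
              have hpow : (s ^ 2) ^ ((r + N') * (r + K)) = (s ^ 2) ^ A * (s ^ 2) ^ (N' * K) := by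
                rw [hexp, pow_add]
              have hne : (s ^ 2) ^ A ≠ 0 := by positivity
              rw [← sq, div_pow (η / 36) s 2, div_pow ((η / 36) ^ 2) (s ^ 2) A, mul_pow c, hpow]
              generalize (s ^ 2) ^ A = y at hne
              field_simp
          _ ≤ _ := by
              push_cast
              gcongr
    _ = ∑ _p : I → Fin n₀ × Fin n₀,
          ENNReal.ofReal ((c * s ^ 2) ^ Fintype.card (Fin (r + N') × Fin (r + K))) := by
        rw [Finset.sum_const, Finset.card_univ, Fintype.card_fun, hcardI, nsmul_eq_mul,
          ENNReal.ofReal_mul (by positivity), ENNReal.ofReal_natCast]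
        simp
    _ ≤ ∑ p, matrixLaw _ (Box p) :=
        Finset.sum_le_sum fun p _ => hbox _ _ _ (hω₀ p) hspos.le (hsδ.trans hδ1)
    _ = matrixLaw _ (⋃ p, Box p) := by
        rw [measure_iUnion hdisj hmeas, tsum_fintype]
    _ ≤ _ := measure_mono (Set.iUnion_subset hsub)

/-! ### From the power law to the exponent -/

/-- A power-law lower bound on `Pout` bounds the exponent from below. -/
lemma le_liminf_of_pow_lower {M N d : ℕ} {R c : ℝ} (hc : 0 < c)
    (h : ∀ ρ : ℝ, 1 ≤ ρ → c / ρ ^ d ≤ Pout M N R ρ) :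
    -(d : ℝ) ≤ liminf (fun ρ : ℝ => Real.log (Pout M N R ρ) / Real.log ρ) atTop := by
  have hlim : Tendsto (fun ρ : ℝ => Real.log c / Real.log ρ - d) atTop (nhds (-(d : ℝ))) := by
    have := (Real.tendsto_log_atTop.const_div_atTop (Real.log c)).sub_const (d : ℝ)
    simpa using this
  rw [← hlim.liminf_eq]
  refine liminf_le_liminf ?_ hlim.isBoundedUnder_ge ?_
  · filter_upwards [eventually_gt_atTop 1] with ρ hρ
    have hlog : 0 < Real.log ρ := Real.log_pos hρ
    have hρ0 : 0 < ρ := by linarith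
    have h1 := Real.log_le_log (by positivity) (h ρ hρ.le)
    rw [Real.log_div hc.ne' (by positivity), Real.log_pow] at h1
    rw [le_div_iff₀ hlog, sub_mul, div_mul_cancel₀ _ hlog.ne']
    exact h1
  · refine IsBoundedUnder.isCoboundedUnder_ge ⟨0, ?_⟩
    rw [eventually_map]
    filter_upwards [eventually_gt_atTop 1] with ρ hρ
    refine div_nonpos_of_nonpos_of_nonneg (Real.log_nonpos ENNReal.toReal_nonneg ?_)
      (Real.log_pos hρ).le
    exact ENNReal.toReal_le_of_le_ofReal zero_le_one (by simpa using prob_le_one)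

/-- For every rate `R > 0` such that `M·2^{−R/M}` is not a positive integer, the MMSE
outage probability is exponentially lower bounded by `ρ^{−d_out(R,M,N)}`:
`liminf_{ρ→∞} log P_out(ρ) / log ρ ≥ −d_out(R,M,N)`. -/
theorem mmse_outage_exponent_lower_bound (M N : ℕ) (hM : 1 ≤ M) (hN : 1 ≤ N)
    (R : ℝ) (hR : 0 < R)
    (hnonint : ∀ n : ℕ, 0 < n → (M : ℝ) * 2 ^ (-(R / M)) ≠ n) :
    -dOut R M N ≤
      liminf (fun ρ : ℝ => Real.log (Pout M N R ρ) / Real.log ρ) atTop := by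
  have hMR : (0 : ℝ) < M := by exact_mod_cast hM
  set q : ℝ := (2 : ℝ) ^ (-(R / M)) with hqdef
  have hq0 : 0 < q := by positivity
  have hq1 : q < 1 := Real.rpow_lt_one_of_one_lt_of_neg one_lt_two (by
    have : 0 < R / M := by positivity
    linarith)
  have hx0 : 0 < M * q := by positivity
  have hxM : M * q < M := by nlinarith
  -- `j` is the number of eigenvalues forced to be of order `ρ⁻¹`, and `K` the resulting corank.
  obtain ⟨j, hj⟩ : ∃ j : ℕ, ⌈max ((M : ℝ) * q - max ((M : ℝ) - N) 0) 0⌉ = (j : ℤ) :=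
    Int.eq_ofNat_of_zero_le (Int.ceil_nonneg (le_max_right _ _))
  have hjle : (M : ℝ) * q - max ((M : ℝ) - N) 0 ≤ j := by
    have h1 := Int.le_ceil (max ((M : ℝ) * q - max ((M : ℝ) - N) 0) 0)
    rw [hj] at h1
    exact (le_max_left _ _).trans (by exact_mod_cast h1)
  have hjup : ∀ n : ℕ, (M : ℝ) * q - max ((M : ℝ) - N) 0 ≤ n → j ≤ n := by
    intro n hn
    have h1 : ⌈max ((M : ℝ) * q - max ((M : ℝ) - N) 0) 0⌉ ≤ (n : ℤ) :=
      Int.ceil_le.2 (max_le (by exact_mod_cast hn) (by positivity))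
    rw [hj] at h1
    exact_mod_cast h1
  rw [dOut, ← hqdef, hj]
  -- If `M q ≤ K`, the inequality is strict because `M q` is positive and not a positive integer.
  have hstrict : ∀ K : ℕ, M * q ≤ K → 0 < K ∧ q * M < K := by
    intro K hK
    have hKpos : 0 < K := by exact_mod_cast hx0.trans_le hK
    exact ⟨hKpos, by rw [mul_comm]; exact lt_of_le_of_ne hK (hnonint K hKpos)⟩
  rcases le_total N M with hNM | hMN
  · obtain ⟨D, rfl⟩ := Nat.exists_eq_add_of_le hNM
    have hmax : max (((N + D : ℕ) : ℝ) - N) 0 = D := by push_cast; simp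
    rw [hmax] at hjle hjup
    obtain ⟨r, rfl⟩ := Nat.exists_eq_add_of_le' (hjup N (by push_cast at hxM ⊢; linarith))
    obtain ⟨hK, hKq⟩ := hstrict (j + D) (by push_cast at hjle ⊢; linarith)
    obtain ⟨c, hc, h⟩ := Pout_lower r j (j + D) hK R (by rw [← add_assoc r j D]; exact hKq)
    rw [← add_assoc r j D] at h
    refine le_trans (le_of_eq ?_) (le_liminf_of_pow_lower hc h)
    have habs : |((r + j : ℕ) : ℝ) - ((r + j + D : ℕ) : ℝ)| = D := by
      push_cast
      rw [show (r + j : ℝ) - (r + j + D) = -D by ring, abs_neg, Nat.abs_cast]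
    rw [habs]
    push_cast
    ring
  · obtain ⟨D, rfl⟩ := Nat.exists_eq_add_of_le hMN
    have hmax : max ((M : ℝ) - (M + D : ℕ)) 0 = 0 := by
      push_cast
      exact max_eq_right (by linarith [Nat.cast_nonneg (α := ℝ) D])
    rw [hmax] at hjle hjup
    obtain ⟨r, rfl⟩ := Nat.exists_eq_add_of_le' (hjup M (by linarith))
    obtain ⟨hK, hKq⟩ := hstrict j (by linarith)
    obtain ⟨c, hc, h⟩ := Pout_lower r (j + D) j hK R hKq
    rw [add_assoc r j D]
    refine le_trans (le_of_eq ?_) (le_liminf_of_pow_lower hc h)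
    have habs : |((r + (j + D) : ℕ) : ℝ) - ((r + j : ℕ) : ℝ)| = D := by
      push_cast
      rw [show (r + (j + D) : ℝ) - (r + j) = D by ring, Nat.abs_cast]
    rw [habs]
    push_cast
    ring

end
end

section
/- For every rate R > 0 such that M·2^{−R/M} is not a positive integer, the MMSE outage probability of the flat-fading MIMO channel is exponentially equal to ρ^{−d_out(R,M,N)}: the limit lim_{ρ→∞} log P_out(ρ) / log ρ exists and equals −d_out(R,M,N). In particular the diversity gain of the MMSE MIMO receiver at fixed rate R is exactly d_out(R,M,N) = ⌈(M·2^{−R/M} − (M−N)⁺)⁺⌉² + |N−M|·⌈(M·2^{−R/M} − (M−N)⁺)⁺⌉. -/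
/-!
Write `m = M · 2 ^ (-R / M)`, `r = ⌈m⌉` and let `mse ρ H k = 1 / (1 + γ_k)` be the `k`-th diagonal
entry of `(1 + ρ HᴴH)⁻¹`. Outage means that the geometric mean of the `mse ρ H k` exceeds
`2 ^ (-R / M)`. The probability of this event is, up to constants, `ρ ^ (-(N - q) (M - q))` with
`q = min (M - r) N`, that is, the volume of a neighbourhood of radius `ρ ^ (-1/2)` of the
`N × M` matrices of rank at most `q`; `dOut_eq` identifies this exponent with `dOut`.

*Upper bound* (`Pout_le`). By the inequality between the arithmetic and geometric means, outage
forces the trace of `(1 + ρ HᴴH)⁻¹` above `m` (`lt_sum_mse_of_outage`). As `m > r - 1`, at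
least `r` eigenvalues of `HᴴH` are then `O(1 / ρ)`; suppose `q = M - r`, as for `q = N` the exponent
vanishes and there is nothing to prove. Any `q + 1` columns of `H`
then have a unit combination of norm `O(ρ ^ (-1/2))` (`exists_near_kernel`). Choose a
`q × q` minor of `H` of largest modulus. Cramer's rule in the bordering `q + 1` by `q + 1` blocks bounds
every entry of its Schur complement by `O(ρ ^ (-1/2))` (`exists_small_schur`); this choice of pivot
spares any discussion of the smallest singular value of the pivot block. Given the entries in the
pivot rows and columns, each of the `(N - q) (M - q)` other entries therefore lies in a given disc
of area `O(1 / ρ)`, which has probability `O(1 / ρ)`. Fubini (`tube_le`) and a union over the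
finitely many pivot positions conclude.

*Lower bound* (`le_Pout`). The matrix whose first `q` rows are Fourier vectors and whose other rows
vanish has a kernel of dimension `M - q` onto which all basis vectors project with the same squared
length `1 - q / M > 2 ^ (-R / M)`; the inequality is strict because `m < r`, which is where `m` is
assumed not to be an integer. The matrices whose Schur complement is `O(ρ ^ (-1/2))` with a small
constant, and whose pivot rows and columns are close to those of this matrix, have probability at
least a constant times `ρ ^ (-(N - q) (M - q))` (`tube_ge`). On this set the Fourier test vectors,
corrected so as to be killed by the pivot rows, depend continuously on `H` and are nearly killed by
`H`, so the variational bound `norm_sq_le_mse` gives `mse ρ H k > 2 ^ (-R / M)` for each `k`, which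
is outage.
-/

open MeasureTheory ProbabilityTheory Filter Matrix

noncomputable section

/-! ### Small balls under the Gaussian law -/

lemma gauss_ball_le : ∃ K : ℝ, 0 < K ∧ ∀ (c ε : ℝ), 0 ≤ ε →
    gaussianReal 0 (1 / 2) (Metric.closedBall c ε) ≤ ENNReal.ofReal (K * ε) := by
  refine ⟨(Real.sqrt (2 * Real.pi * (1 / 2 : NNReal)))⁻¹ * 2, by positivity, fun c ε hε => ?_⟩
  rw [gaussianReal_apply _ (by norm_num)]
  calc ∫⁻ x in Metric.closedBall c ε, gaussianPDF 0 (1 / 2) x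
      ≤ ∫⁻ x in Metric.closedBall c ε,
          ENNReal.ofReal ((Real.sqrt (2 * Real.pi * (1 / 2 : NNReal)))⁻¹) := by
        refine lintegral_mono fun x => ENNReal.ofReal_le_ofReal ?_
        rw [gaussianPDFReal]
        refine mul_le_of_le_one_right (by positivity) (Real.exp_le_one_iff.2 ?_)
        have : 0 ≤ (x - 0) ^ 2 / (2 * ((1 / 2 : NNReal) : ℝ)) := by positivity
        rw [neg_div]; linarith
    _ = _ := by
        rw [setLIntegral_const, Real.volume_closedBall, ← ENNReal.ofReal_mul (by positivity)]
        congr 1; ring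

lemma gauss_ball_ge : ∃ K : ℝ, 0 < K ∧ ∀ (c ε : ℝ), |c| ≤ 1 → 0 ≤ ε → ε ≤ 1 →
    ENNReal.ofReal (K * ε) ≤ gaussianReal 0 (1 / 2) (Metric.closedBall c ε) := by
  refine ⟨(Real.sqrt (2 * Real.pi * (1 / 2 : NNReal)))⁻¹ * Real.exp (-4) * 2, by positivity,
    fun c ε hc hε hε1 => ?_⟩
  rw [gaussianReal_apply _ (by norm_num)]
  calc _ = ∫⁻ x in Metric.closedBall c ε,
          ENNReal.ofReal ((Real.sqrt (2 * Real.pi * (1 / 2 : NNReal)))⁻¹ * Real.exp (-4)) := by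
        rw [setLIntegral_const, Real.volume_closedBall, ← ENNReal.ofReal_mul (by positivity)]
        congr 1; ring
    _ ≤ ∫⁻ x in Metric.closedBall c ε, gaussianPDF 0 (1 / 2) x := by
        refine setLIntegral_mono' measurableSet_closedBall fun x hx => ENNReal.ofReal_le_ofReal ?_
        rw [gaussianPDFReal]
        refine mul_le_mul_of_nonneg_left (Real.exp_le_exp.2 ?_) (by positivity)
        rw [Metric.mem_closedBall, Real.dist_eq] at hx
        have h2 : |x| ≤ 2 := by
          have := abs_sub_abs_le_abs_sub x c
          linarith
        have : x ^ 2 ≤ 4 := by nlinarith [abs_nonneg x, sq_abs x]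
        push_cast
        rw [neg_div]; norm_num; linarith

lemma entry_ball (c : ℝ × ℝ) (ε : ℝ) : entryLaw (Metric.closedBall c ε) =
    gaussianReal 0 (1 / 2) (Metric.closedBall c.1 ε) *
      gaussianReal 0 (1 / 2) (Metric.closedBall c.2 ε) := by
  rw [entryLaw, ← closedBall_prod_same, Measure.prod_prod]

lemma entry_ball_le : ∃ K : ℝ, 0 < K ∧ ∀ (c : ℝ × ℝ) (ε : ℝ), 0 ≤ ε →
    entryLaw (Metric.closedBall c ε) ≤ ENNReal.ofReal (K * ε ^ 2) := by
  obtain ⟨K, hK, h⟩ := gauss_ball_le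
  refine ⟨K ^ 2, by positivity, fun c ε hε => ?_⟩
  rw [entry_ball]
  calc _ ≤ ENNReal.ofReal (K * ε) * ENNReal.ofReal (K * ε) := by gcongr <;> exact h _ _ hε
    _ = _ := by rw [← ENNReal.ofReal_mul (by positivity)]; congr 1; ring

lemma entry_ball_ge : ∃ K : ℝ, 0 < K ∧ ∀ (c : ℝ × ℝ) (ε : ℝ), ‖c‖ ≤ 1 → 0 ≤ ε → ε ≤ 1 →
    ENNReal.ofReal (K * ε ^ 2) ≤ entryLaw (Metric.closedBall c ε) := by
  obtain ⟨K, hK, h⟩ := gauss_ball_ge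
  refine ⟨K ^ 2, by positivity, fun c ε hc hε hε1 => ?_⟩
  rw [entry_ball]
  have h1 : |c.1| ≤ 1 := (norm_fst_le c).trans hc
  have h2 : |c.2| ≤ 1 := (norm_snd_le c).trans hc
  calc _ = ENNReal.ofReal (K * ε) * ENNReal.ofReal (K * ε) := by
          rw [← ENNReal.ofReal_mul (by positivity)]; congr 1; ring
    _ ≤ _ := by
          gcongr
          · exact h _ _ h1 hε hε1
          · exact h _ _ h2 hε hε1

/-- The law of the entries charges every closed ball of positive radius, whatever its centre. -/
lemma entry_ball_pos (c : ℝ × ℝ) {η : ℝ} (hη : 0 < η) :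
    0 < entryLaw (Metric.closedBall c η) := by
  rw [entry_ball]
  have key : ∀ x : ℝ, 0 < gaussianReal 0 (1 / 2) (Metric.closedBall x η) := by
    intro x
    refine pos_iff_ne_zero.2 fun h => ?_
    have := gaussianReal_absolutelyContinuous' 0 (v := 1 / 2) (by norm_num) h
    rw [Real.volume_closedBall, ENNReal.ofReal_eq_zero] at this
    linarith
  exact ENNReal.mul_pos (key _).ne' (key _).ne'

/-! ### Tubes around graphs -/

section Fubini
variable {ι : Type*}

/-- Fubini over the coordinates in `B`, the others being frozen. -/
lemma matrixLaw_eq_lintegral [Fintype ι] (B : ι → Prop) [DecidablePred B] {E : Set (ι → ℝ × ℝ)}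
    (hE : MeasurableSet E) :
    matrixLaw ι E = ∫⁻ x, matrixLaw {i // B i}
      {y | (MeasurableEquiv.piEquivPiSubtypeProd (fun _ : ι => ℝ × ℝ) B).symm (y, x) ∈ E}
      ∂(matrixLaw {i // ¬ B i}) := by
  have h := (measurePreserving_piEquivPiSubtypeProd (fun _ : ι => entryLaw) B).symm
  have h1 := h.measure_preimage hE.nullMeasurableSet
  unfold matrixLaw
  rw [← h1, Measure.prod_apply_symm (by exact (MeasurableEquiv.measurable _) hE)]
  rfl

lemma glue_pos (B : ι → Prop) [DecidablePred B] (y : {i // B i} → ℝ × ℝ)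
    (x : {i // ¬ B i} → ℝ × ℝ) {i : ι} (h : B i) :
    (MeasurableEquiv.piEquivPiSubtypeProd (fun _ : ι => ℝ × ℝ) B).symm (y, x) i = y ⟨i, h⟩ := by
  change (Equiv.piEquivPiSubtypeProd B (fun _ : ι => ℝ × ℝ)).symm (y, x) i = _
  simp [h]

lemma glue_neg (B : ι → Prop) [DecidablePred B] (y : {i // B i} → ℝ × ℝ)
    (x : {i // ¬ B i} → ℝ × ℝ) {i : ι} (h : ¬ B i) :
    (MeasurableEquiv.piEquivPiSubtypeProd (fun _ : ι => ℝ × ℝ) B).symm (y, x) i = x ⟨i, h⟩ := by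
  change (Equiv.piEquivPiSubtypeProd B (fun _ : ι => ℝ × ℝ)).symm (y, x) i = _
  simp [h]

lemma measurableSet_tube [Fintype ι] (B : ι → Prop) {c : (ι → ℝ × ℝ) → ι → ℝ × ℝ} (hc : Measurable c)
    (ε : ℝ) : MeasurableSet {ω | ∀ b, B b → dist (ω b) (c ω b) ≤ ε} := by
  simp only [Set.ofPred_forall]
  refine MeasurableSet.iInter fun b => MeasurableSet.iInter fun _ => ?_
  exact measurableSet_le (by fun_prop) measurable_const

/-- If the centre `c` depends only on the coordinates outside `B`, the coordinates in `B` are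
independently within `ε` of it with probability at most a constant times `ε ^ 2` each. -/
lemma tube_le [Fintype ι] : ∃ K : ℝ, 0 < K ∧ ∀ (B : ι → Prop) [DecidablePred B]
    (c : (ι → ℝ × ℝ) → ι → ℝ × ℝ), Measurable c →
    (∀ ω ω', (∀ i, ¬ B i → ω i = ω' i) → ∀ b, B b → c ω b = c ω' b) → ∀ ε : ℝ, 0 ≤ ε →
    matrixLaw ι {ω | ∀ b, B b → dist (ω b) (c ω b) ≤ ε}
      ≤ ENNReal.ofReal ((K * ε ^ 2) ^ Fintype.card {i // B i}) := by
  obtain ⟨K, hK, h⟩ := entry_ball_le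
  refine ⟨K, hK, fun B _ c hc hinv ε hε => ?_⟩
  rw [matrixLaw_eq_lintegral B (measurableSet_tube B hc ε)]
  have : ∀ x, matrixLaw {i // B i}
      {y | (MeasurableEquiv.piEquivPiSubtypeProd (fun _ : ι => ℝ × ℝ) B).symm (y, x) ∈
        {ω | ∀ b, B b → dist (ω b) (c ω b) ≤ ε}} ≤
      ENNReal.ofReal ((K * ε ^ 2) ^ Fintype.card {i // B i}) := by
    intro x
    set g := (MeasurableEquiv.piEquivPiSubtypeProd (fun _ : ι => ℝ × ℝ) B).symm
    have hsub : {y | g (y, x) ∈ {ω | ∀ b, B b → dist (ω b) (c ω b) ≤ ε}} ⊆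
        Set.univ.pi fun b : {i // B i} => Metric.closedBall (c (g (0, x)) b) ε := by
      intro y hy b _
      have h1 := hy b.1 b.2
      rw [glue_pos B y x b.2, hinv (g (y, x)) (g (0, x)) (fun i hi => by
        rw [glue_neg B y x hi, glue_neg B 0 x hi]) b.1 b.2] at h1
      exact h1
    refine (measure_mono hsub).trans ?_
    rw [matrixLaw, Measure.pi_pi, ENNReal.ofReal_pow (by positivity)]
    refine (Finset.prod_le_prod' fun b _ => h _ _ hε).trans ?_
    simp
  refine (lintegral_mono this).trans ?_
  have : IsProbabilityMeasure (matrixLaw {i // ¬ B i}) := by unfold matrixLaw; infer_instance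
  simp

/-- Matching lower bound: the coordinates outside `B` range over a fixed box, on which the centre
stays bounded. -/
lemma tube_ge [Fintype ι] (B : ι → Prop) [DecidablePred B]
    (c : (ι → ℝ × ℝ) → ι → ℝ × ℝ) (hc : Measurable c)
    (hinv : ∀ ω ω', (∀ i, ¬ B i → ω i = ω' i) → ∀ b, B b → c ω b = c ω' b)
    (ω₀ : ι → ℝ × ℝ) {η : ℝ} (hη : 0 < η)
    (hbd : ∀ ω, (∀ i, ¬ B i → dist (ω i) (ω₀ i) ≤ η) → ∀ b, B b → ‖c ω b‖ ≤ 1) :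
    ∃ K : ℝ, 0 < K ∧ ∀ ε : ℝ, 0 ≤ ε → ε ≤ 1 →
    ENNReal.ofReal (K * (ε ^ 2) ^ Fintype.card {i // B i}) ≤
    matrixLaw ι ({ω | ∀ b, ¬ B b → dist (ω b) (ω₀ b) ≤ η} ∩
      {ω | ∀ b, B b → dist (ω b) (c ω b) ≤ ε}) := by
  obtain ⟨K, hK, h⟩ := entry_ball_ge
  have : IsProbabilityMeasure (matrixLaw {i // ¬ B i}) := by unfold matrixLaw; infer_instance
  set G : Set ({i // ¬ B i} → ℝ × ℝ) :=
    Set.univ.pi fun b : {i // ¬ B i} => Metric.closedBall (ω₀ b) η with hG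
  have hGm : MeasurableSet G := MeasurableSet.univ_pi fun _ => measurableSet_closedBall
  have hGpos : 0 < matrixLaw _ G := by
    rw [matrixLaw, hG, Measure.pi_pi]
    exact pos_iff_ne_zero.2 (Finset.prod_ne_zero_iff.2 fun b _ => (entry_ball_pos _ hη).ne')
  have hGtop : matrixLaw _ G ≠ ⊤ := measure_ne_top _ _
  refine ⟨(matrixLaw _ G).toReal * K ^ Fintype.card {i // B i},
    mul_pos (ENNReal.toReal_pos hGpos.ne' hGtop) (by positivity), fun ε hε hε1 => ?_⟩
  have hm1 := measurableSet_tube (fun b => ¬ B b) (c := fun _ => ω₀) measurable_const η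
  rw [matrixLaw_eq_lintegral B (hm1.inter (measurableSet_tube B hc ε))]
  set g := (MeasurableEquiv.piEquivPiSubtypeProd (fun _ : ι => ℝ × ℝ) B).symm
  calc _ = ∫⁻ x in G, ENNReal.ofReal ((K * ε ^ 2) ^ Fintype.card {i // B i})
        ∂(matrixLaw {i // ¬ B i}) := by
        rw [setLIntegral_const, mul_pow, mul_assoc, ENNReal.ofReal_mul (by positivity),
          ENNReal.ofReal_toReal hGtop, mul_comm]
    _ ≤ ∫⁻ x in G, matrixLaw {i // B i}
      {y | g (y, x) ∈ {ω | ∀ b, ¬ B b → dist (ω b) (ω₀ b) ≤ η} ∩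
        {ω | ∀ b, B b → dist (ω b) (c ω b) ≤ ε}} ∂(matrixLaw {i // ¬ B i}) := by
        refine setLIntegral_mono' hGm fun x hx => ?_
        have hxG : ∀ y, ∀ b, ¬ B b → dist (g (y, x) b) (ω₀ b) ≤ η := by
          intro y b hb
          rw [glue_neg B y x hb]
          exact hx ⟨b, hb⟩ trivial
        have hsub : (Set.univ.pi fun b : {i // B i} => Metric.closedBall (c (g (0, x)) b) ε) ⊆
            {y | g (y, x) ∈ {ω | ∀ b, ¬ B b → dist (ω b) (ω₀ b) ≤ η} ∩
              {ω | ∀ b, B b → dist (ω b) (c ω b) ≤ ε}} := by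
          intro y hy
          refine ⟨hxG y, fun b hb => ?_⟩
          rw [glue_pos B y x hb, hinv (g (y, x)) (g (0, x)) (fun i hi => by
            rw [glue_neg B y x hi, glue_neg B 0 x hi]) b hb]
          exact hy ⟨b, hb⟩ trivial
        refine le_trans ?_ (measure_mono hsub)
        rw [matrixLaw, Measure.pi_pi, ENNReal.ofReal_pow (by positivity)]
        refine le_trans ?_ (Finset.prod_le_prod' fun b _ =>
          h _ _ (hbd _ (hxG 0) b.1 b.2) hε hε1)
        simp
    _ ≤ _ := setLIntegral_le_lintegral _ _

end Fubini

/-! ### Pivots and Schur complements -/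

/-- The cross (skeleton) approximation of `H` on the rows `I` and columns `J`, so that
`H - skel H I J` is the Schur complement of the pivot block `H.submatrix I J`. The inverse is
meaningful when the pivot block is nonsingular. -/
def skel {M N p : ℕ} (H : Matrix (Fin N) (Fin M) ℂ) (I : Fin p → Fin N) (J : Fin p → Fin M) :
    Matrix (Fin N) (Fin M) ℂ :=
  H.submatrix id J * (H.submatrix I J)⁻¹ * H.submatrix I id

lemma det_border {M N p : ℕ} (H : Matrix (Fin N) (Fin M) ℂ) (I : Fin p → Fin N)
    (J : Fin p → Fin M) (hd : (H.submatrix I J).det ≠ 0) (i : Fin N) (j : Fin M) :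
    (H.submatrix (Fin.snoc I i : Fin (p + 1) → Fin N) (Fin.snoc J j : Fin (p + 1) → Fin M)).det =
      (H.submatrix I J).det * (H i j - skel H I J i j) := by
  have : Invertible (H.submatrix I J) := Matrix.invertibleOfIsUnitDet _ (isUnit_iff_ne_zero.2 hd)
  have key := det_fromBlocks₁₁ (H.submatrix I J) (H.submatrix I (fun _ : Fin 1 => j))
    (H.submatrix (fun _ : Fin 1 => i) J) (H.submatrix (fun _ : Fin 1 => i) (fun _ : Fin 1 => j))
  rw [← Matrix.det_submatrix_equiv_self (finSumFinEquiv (m := p) (n := 1))]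
  convert key using 2
  · ext a b
    rcases a with a | a <;> rcases b with b | b <;>
      simp [Fin.snoc, Fin.natAdd, Fin.castAdd, Fin.castLE, Fin.fin_one_eq_zero]
  · rw [det_fin_one]
    simp [skel, Matrix.mul_apply, Matrix.submatrix_apply]

/-- Cramer's rule as an a priori bound: a vector with small image is small compared with the ratio
of the largest cofactor to the determinant. -/
lemma cramer_bound {p : ℕ} (B : Matrix (Fin (p + 1)) (Fin (p + 1)) ℂ) (w : Fin (p + 1) → ℂ)
    {D δ : ℝ} (hD : ∀ a b, ‖(B.submatrix (Fin.succAbove a) (Fin.succAbove b)).det‖ ≤ D)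
    (hδ : ∀ a, ‖(B *ᵥ w) a‖ ≤ δ) (b : Fin (p + 1)) :
    ‖w b‖ * ‖B.det‖ ≤ (p + 1) * δ * D := by
  have h : (B.adjugate *ᵥ (B *ᵥ w)) b = B.det * w b := by
    rw [mulVec_mulVec, adjugate_mul, smul_mulVec, one_mulVec]; rfl
  have h0 : 0 ≤ δ := (norm_nonneg _).trans (hδ b)
  rw [mul_comm, ← norm_mul, ← h, mulVec, dotProduct]
  refine (norm_sum_le _ _).trans ?_
  calc _ ≤ ∑ _a : Fin (p + 1), D * δ := by
        refine Finset.sum_le_sum fun a _ => ?_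
        rw [norm_mul]
        refine mul_le_mul ?_ (hδ a) (norm_nonneg _) ((norm_nonneg _).trans (hD b b))
        rw [adjugate_fin_succ_eq_det_submatrix, norm_mul, norm_pow, norm_neg, norm_one, one_pow,
          one_mul]
        exact hD a b
    _ = _ := by simp; ring

/-- A pivot of largest modulus among the `q`-minors or, if these all vanish, a nonzero minor of maximal
size, for which the Schur complement vanishes. -/
lemma exists_pivot {M N : ℕ} (H : Matrix (Fin N) (Fin M) ℂ) (q : ℕ) :
    ∃ p, p ≤ q ∧ ∃ (I : Fin p → Fin N) (J : Fin p → Fin M), (H.submatrix I J).det ≠ 0 ∧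
      ((p = q ∧ ∀ (I' : Fin p → Fin N) (J' : Fin p → Fin M),
          ‖(H.submatrix I' J').det‖ ≤ ‖(H.submatrix I J).det‖) ∨
        ∀ (I' : Fin (p + 1) → Fin N) (J' : Fin (p + 1) → Fin M), (H.submatrix I' J').det = 0) := by
  classical
  let P : ℕ → Prop := fun p =>
    ∃ (I : Fin p → Fin N) (J : Fin p → Fin M), (H.submatrix I J).det ≠ 0
  have hP0 : P 0 := ⟨Fin.elim0, Fin.elim0, by simp⟩
  set p := Nat.findGreatest P q with hp
  have hle : p ≤ q := Nat.findGreatest_le q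
  have hPp : P p := Nat.findGreatest_spec (Nat.zero_le q) hP0
  refine ⟨p, hle, ?_⟩
  rcases hle.eq_or_lt with heq | hlt
  · obtain ⟨I, J, hIJ⟩ := hPp
    have : Nonempty ((Fin p → Fin N) × (Fin p → Fin M)) := ⟨(I, J)⟩
    obtain ⟨⟨I', J'⟩, hmax⟩ := Finite.exists_max
      (fun IJ : (Fin p → Fin N) × (Fin p → Fin M) => ‖(H.submatrix IJ.1 IJ.2).det‖)
    refine ⟨I', J', ?_, Or.inl ⟨heq, fun A B => hmax (A, B)⟩⟩
    exact norm_pos_iff.1 ((norm_pos_iff.2 hIJ).trans_le (hmax (I, J)))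
  · obtain ⟨I, J, hIJ⟩ := hPp
    refine ⟨I, J, hIJ, Or.inr fun I' J' => ?_⟩
    by_contra hne
    exact Nat.findGreatest_is_greatest (P := P) (n := q) (k := p + 1)
      (Nat.lt_succ_self _) hlt ⟨I', J', hne⟩

lemma injective_of_det_ne_zero {M N p : ℕ} {H : Matrix (Fin N) (Fin M) ℂ} {I : Fin p → Fin N}
    {J : Fin p → Fin M} (hd : (H.submatrix I J).det ≠ 0) :
    Function.Injective I ∧ Function.Injective J := by
  constructor
  · intro a b hab
    by_contra hne
    exact hd (det_zero_of_row_eq hne (by ext k; simp [hab]))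
  · intro a b hab
    by_contra hne
    exact hd (det_zero_of_column_eq hne (fun k => by simp [hab]))

/-- If every `q + 1` columns of `H` are `δ`-close to linear dependence, the Schur complement of the
pivot given by `exists_pivot` is entrywise at most `(q + 1) δ`. -/
lemma exists_small_schur {M N q : ℕ} (H : Matrix (Fin N) (Fin M) ℂ) {δ : ℝ} (hδ : 0 ≤ δ)
    (hH : ∀ J' : Fin (q + 1) → Fin M, Function.Injective J' → ∃ x : Fin (q + 1) → ℂ, x ≠ 0 ∧
      ∀ i, ‖(H.submatrix id J' *ᵥ x) i‖ ≤ δ * ‖x‖) :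
    ∃ p, p ≤ q ∧ ∃ (I : Fin p → Fin N) (J : Fin p → Fin M), (H.submatrix I J).det ≠ 0 ∧
      ∀ i j, i ∉ Set.range I → j ∉ Set.range J → ‖H i j - skel H I J i j‖ ≤ (q + 1) * δ := by
  obtain ⟨p, hpq, I, J, hd, hor⟩ := exists_pivot H q
  refine ⟨p, hpq, I, J, hd, fun i j hi hj => ?_⟩
  have hb := det_border H I J hd i j
  rcases hor with ⟨rfl, hmax⟩ | hzero
  · have hJ : Function.Injective (Fin.snoc J j : Fin (p + 1) → Fin M) :=
      Fin.snoc_injective_iff.2 ⟨(injective_of_det_ne_zero hd).2, hj⟩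
    obtain ⟨x, hx0, hx⟩ := hH _ hJ
    obtain ⟨b, hb'⟩ : ∃ b, ‖x‖ = ‖x b‖ := by
      obtain ⟨b, hbm⟩ := Finite.exists_max (fun b => ‖x b‖)
      exact ⟨b, le_antisymm ((pi_norm_le_iff_of_nonneg (norm_nonneg _)).2 hbm) (norm_le_pi_norm x b)⟩
    have hc := cramer_bound
      (H.submatrix (Fin.snoc I i : Fin (p + 1) → Fin N) (Fin.snoc J j : Fin (p + 1) → Fin M)) x
      (D := ‖(H.submatrix I J).det‖) (δ := δ * ‖x‖)
      (fun a b => by rw [submatrix_submatrix]; exact hmax _ _)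
      (fun a => by simpa [mulVec, dotProduct] using hx ((Fin.snoc I i : Fin (p + 1) → Fin N) a)) b
    rw [hb, norm_mul, ← hb'] at hc
    have h1 : 0 < ‖x‖ := norm_pos_iff.2 hx0
    have h2 : 0 < ‖(H.submatrix I J).det‖ := norm_pos_iff.2 hd
    refine le_of_mul_le_mul_left ?_ (mul_pos h1 h2)
    linarith
  · rw [hzero] at hb
    have : H i j - skel H I J i j = 0 := by simpa [hd] using hb.symm
    rw [this, norm_zero]; positivity

/-! ### Spectral form of the mean-square errors -/

lemma star_dotProduct_self {m : ℕ} (w : Fin m → ℂ) :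
    star w ⬝ᵥ w = ((∑ i, ‖w i‖ ^ 2 : ℝ) : ℂ) := by
  simp [dotProduct, Complex.conj_mul']

lemma sum_norm_sq_mulVec {m n : ℕ} (A : Matrix (Fin m) (Fin n) ℂ) (v : Fin n → ℂ) :
    ((∑ i, ‖(A *ᵥ v) i‖ ^ 2 : ℝ) : ℂ) = star v ⬝ᵥ ((Aᴴ * A) *ᵥ v) := by
  rw [← star_dotProduct_self, star_mulVec, ← dotProduct_mulVec, mulVec_mulVec]

open ComplexOrder in
lemma exists_spectral {M N : ℕ} (H : Matrix (Fin N) (Fin M) ℂ) :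
    ∃ (U : Matrix (Fin M) (Fin M) ℂ) (l : Fin M → ℝ), (∀ i, 0 ≤ l i) ∧ Uᴴ * U = 1 ∧ U * Uᴴ = 1 ∧
      Hᴴ * H = U * diagonal (fun i => (l i : ℂ)) * Uᴴ := by
  have hps := posSemidef_conjTranspose_mul_self H
  refine ⟨hps.1.eigenvectorUnitary, hps.1.eigenvalues, hps.eigenvalues_nonneg, ?_, ?_, ?_⟩
  · exact Unitary.coe_star_mul_self _
  · exact Unitary.coe_mul_star_self _
  · have := hps.1.spectral_theorem
    rw [Unitary.conjStarAlgAut_apply] at this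
    exact this

section Spectral
variable {M N : ℕ} {H : Matrix (Fin N) (Fin M) ℂ} {U : Matrix (Fin M) (Fin M) ℂ} {l : Fin M → ℝ}

lemma sum_norm_sq_unitary (hU' : U * Uᴴ = 1) (v : Fin M → ℂ) :
    ∑ i, ‖(Uᴴ *ᵥ v) i‖ ^ 2 = ∑ i, ‖v i‖ ^ 2 := by
  have := sum_norm_sq_mulVec Uᴴ v
  rw [conjTranspose_conjTranspose, hU', one_mulVec, star_dotProduct_self] at this
  exact_mod_cast this

lemma sum_norm_sq_eq (hH : Hᴴ * H = U * diagonal (fun i => (l i : ℂ)) * Uᴴ) (v : Fin M → ℂ) :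
    ∑ i, ‖(H *ᵥ v) i‖ ^ 2 = ∑ i, l i * ‖(Uᴴ *ᵥ v) i‖ ^ 2 := by
  have := sum_norm_sq_mulVec H v
  rw [hH, ← mulVec_mulVec, ← mulVec_mulVec, dotProduct_mulVec] at this
  have h2 : star v ᵥ* U = star (Uᴴ *ᵥ v) := by rw [star_mulVec, conjTranspose_conjTranspose]
  rw [h2] at this
  have h3 : star (Uᴴ *ᵥ v) ⬝ᵥ (diagonal (fun i => (l i : ℂ)) *ᵥ (Uᴴ *ᵥ v)) =
      ((∑ i, l i * ‖(Uᴴ *ᵥ v) i‖ ^ 2 : ℝ) : ℂ) := by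
    rw [dotProduct]
    push_cast
    refine Finset.sum_congr rfl fun i _ => ?_
    rw [mulVec_diagonal, ← Complex.conj_mul', Pi.star_apply]
    change (starRingEnd ℂ) _ * _ = _
    ring
  rw [h3] at this
  exact_mod_cast this

lemma inv_apply_eq (hl : ∀ i, 0 ≤ l i) (hU : Uᴴ * U = 1) (hU' : U * Uᴴ = 1)
    (hH : Hᴴ * H = U * diagonal (fun i => (l i : ℂ)) * Uᴴ) {ρ : ℝ} (hρ : 0 < ρ) (k : Fin M) :
    (((1 : Matrix (Fin M) (Fin M) ℂ) + (ρ : ℂ) • (Hᴴ * H))⁻¹ k k).re =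
      ∑ i, ‖U k i‖ ^ 2 / (1 + ρ * l i) := by
  have hpos : ∀ i, 0 < 1 + ρ * l i := fun i => by have := mul_nonneg hρ.le (hl i); linarith
  have hinv : ((1 : Matrix (Fin M) (Fin M) ℂ) + (ρ : ℂ) • (Hᴴ * H))⁻¹ =
      U * diagonal (fun i => ((1 + ρ * l i : ℝ) : ℂ)⁻¹) * Uᴴ := by
    apply inv_eq_right_inv
    have h1 : (1 : Matrix (Fin M) (Fin M) ℂ) + (ρ : ℂ) • (Hᴴ * H) =
        U * diagonal (fun i => ((1 + ρ * l i : ℝ) : ℂ)) * Uᴴ := by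
      have : diagonal (fun i => ((1 + ρ * l i : ℝ) : ℂ)) =
          (1 : Matrix (Fin M) (Fin M) ℂ) + (ρ : ℂ) • diagonal (fun i => (l i : ℂ)) := by
        rw [← diagonal_one, ← diagonal_smul, diagonal_add]
        congr 1; ext i; simp
      rw [this, hH, mul_add, add_mul, mul_one, hU', mul_smul_comm, smul_mul_assoc]
    rw [h1]
    calc _ = U * diagonal (fun i => ((1 + ρ * l i : ℝ) : ℂ)) * (Uᴴ * U) *
          diagonal (fun i => ((1 + ρ * l i : ℝ) : ℂ)⁻¹) * Uᴴ := by simp only [Matrix.mul_assoc]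
      _ = U * (diagonal (fun i => ((1 + ρ * l i : ℝ) : ℂ)) *
          diagonal (fun i => ((1 + ρ * l i : ℝ) : ℂ)⁻¹)) * Uᴴ := by
            rw [hU, Matrix.mul_one]; simp only [Matrix.mul_assoc]
      _ = 1 := by
            rw [diagonal_mul_diagonal]
            have : (fun i => ((1 + ρ * l i : ℝ) : ℂ) * ((1 + ρ * l i : ℝ) : ℂ)⁻¹) = fun _ => 1 := by
              ext i
              exact mul_inv_cancel₀ (by exact_mod_cast (hpos i).ne')
            rw [this, diagonal_one, Matrix.mul_one, hU']
  have hc : ((1 : Matrix (Fin M) (Fin M) ℂ) + (ρ : ℂ) • (Hᴴ * H))⁻¹ k k =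
      ((∑ i, ‖U k i‖ ^ 2 / (1 + ρ * l i) : ℝ) : ℂ) := by
    rw [hinv, Matrix.mul_apply, Complex.ofReal_sum]
    refine Finset.sum_congr rfl fun i _ => ?_
    rw [mul_diagonal, conjTranspose_apply, Complex.ofReal_div, Complex.ofReal_pow,
      ← Complex.conj_mul', div_eq_mul_inv]
    change _ * (starRingEnd ℂ) _ = _
    ring
  rw [hc, Complex.ofReal_re]

lemma sum_row_norm_sq (hU' : U * Uᴴ = 1) (k : Fin M) : ∑ i, ‖U k i‖ ^ 2 = 1 := by
  have h : (U * Uᴴ) k k = 1 := by rw [hU', one_apply_eq]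
  rw [Matrix.mul_apply] at h
  have : ((∑ i, ‖U k i‖ ^ 2 : ℝ) : ℂ) = 1 := by
    rw [← h, Complex.ofReal_sum]
    refine Finset.sum_congr rfl fun i _ => ?_
    rw [conjTranspose_apply, Complex.ofReal_pow, ← Complex.mul_conj']
    rfl
  exact_mod_cast this

end Spectral

/-- The diagonal entry of `(1 + ρ HᴴH)⁻¹`, that is, the inverse of `1 + γ_k`. -/
def mse {M N : ℕ} (ρ : ℝ) (H : Matrix (Fin N) (Fin M) ℂ) (k : Fin M) : ℝ :=
  (((1 : Matrix (Fin M) (Fin M) ℂ) + (ρ : ℂ) • (Hᴴ * H))⁻¹ k k).re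

lemma mse_pos {M N : ℕ} {ρ : ℝ} (hρ : 0 < ρ) (H : Matrix (Fin N) (Fin M) ℂ) (k : Fin M) :
    0 < mse ρ H k := by
  obtain ⟨U, l, hl, hU, hU', hH⟩ := exists_spectral H
  rw [mse, inv_apply_eq hl hU hU' hH hρ]
  have hpos : ∀ i, 0 < 1 + ρ * l i := fun i => by have := mul_nonneg hρ.le (hl i); linarith
  have h1 := sum_row_norm_sq hU' k
  refine lt_of_le_of_ne (Finset.sum_nonneg fun i _ => div_nonneg (sq_nonneg _) (hpos i).le) ?_
  intro h0
  have h2 := (Finset.sum_eq_zero_iff_of_nonneg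
    (fun i _ => div_nonneg (sq_nonneg _) (hpos i).le)).1 h0.symm
  have : ∑ i, ‖U k i‖ ^ 2 = 0 := Finset.sum_eq_zero fun i hi => by
    have := h2 i hi
    rw [div_eq_zero_iff] at this
    exact this.resolve_right (hpos i).ne'
  linarith

/-- Variational lower bound: each test vector `v` bounds the diagonal entry from below, by the
Cauchy–Schwarz inequality in the eigenbasis of `HᴴH`. -/
lemma norm_sq_le_mse {M N : ℕ} {ρ : ℝ} (hρ : 0 < ρ) (H : Matrix (Fin N) (Fin M) ℂ) (k : Fin M)
    (v : Fin M → ℂ) :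
    ‖v k‖ ^ 2 ≤ mse ρ H k * (∑ i, ‖v i‖ ^ 2 + ρ * ∑ i, ‖(H *ᵥ v) i‖ ^ 2) := by
  obtain ⟨U, l, hl, hU, hU', hH⟩ := exists_spectral H
  have hpos : ∀ i, 0 < 1 + ρ * l i := fun i => by have := mul_nonneg hρ.le (hl i); linarith
  rw [mse, inv_apply_eq hl hU hU' hH hρ, ← sum_norm_sq_unitary hU' v, sum_norm_sq_eq hH,
    Finset.mul_sum, ← Finset.sum_add_distrib]
  have hv : v k = ∑ i, U k i * (Uᴴ *ᵥ v) i := by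
    have : (U *ᵥ (Uᴴ *ᵥ v)) k = v k := by rw [mulVec_mulVec, hU', one_mulVec]
    rw [← this]; rfl
  have h1 : ‖v k‖ ≤ ∑ i, ‖U k i‖ * ‖(Uᴴ *ᵥ v) i‖ := by
    rw [hv]
    refine (norm_sum_le _ _).trans (le_of_eq ?_)
    simp only [norm_mul]
  calc ‖v k‖ ^ 2 ≤ (∑ i, ‖U k i‖ * ‖(Uᴴ *ᵥ v) i‖) ^ 2 := by gcongr
    _ ≤ _ := by
        refine Finset.sum_sq_le_sum_mul_sum_of_sq_le_mul _
          (fun i _ => div_nonneg (sq_nonneg _) (hpos i).le)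
          (fun i _ => ?_) (fun i _ => ?_)
        · have := mul_nonneg hρ.le (mul_nonneg (hl i) (sq_nonneg ‖(Uᴴ *ᵥ v) i‖)); positivity
        · have := (hpos i).ne'
          apply le_of_eq
          field_simp

/-- If the trace of `(1 + ρ HᴴH)⁻¹` exceeds `M - q - 1` by a fixed margin, at most `q` eigenvalues
of `HᴴH` exceed a constant times `1 / ρ`, so every `q + 1` columns of `H` are nearly dependent. -/
lemma exists_near_kernel {M N q : ℕ} {ρ δ m : ℝ} (hρ : 0 < ρ) (hδ : 0 < δ)
    (hm : (M : ℝ) - q - 1 + δ * M ≤ m)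
    (H : Matrix (Fin N) (Fin M) ℂ) (htr : m < ∑ k, mse ρ H k)
    (J' : Fin (q + 1) → Fin M) (hJ : Function.Injective J') :
    ∃ x : Fin (q + 1) → ℂ, x ≠ 0 ∧
      ∀ i, ‖(H.submatrix id J' *ᵥ x) i‖ ≤ Real.sqrt ((q + 1) / (δ * ρ)) * ‖x‖ := by
  classical
  obtain ⟨U, l, hl, hU, hU', hH⟩ := exists_spectral H
  have hpos : ∀ i, 0 < 1 + ρ * l i := fun i => by have := mul_nonneg hρ.le (hl i); linarith
  have htr' : ∑ k, mse ρ H k = ∑ i, 1 / (1 + ρ * l i) := by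
    simp only [mse, inv_apply_eq hl hU hU' hH hρ]
    rw [Finset.sum_comm]
    refine Finset.sum_congr rfl fun i _ => ?_
    rw [← Finset.sum_div]
    congr 1
    have := sum_row_norm_sq (U := Uᴴ) (by rw [conjTranspose_conjTranspose, hU]) i
    simpa [conjTranspose_apply] using this
  -- `T` collects the eigendirections on which `HᴴH` is large; counting gives at most `q` of them.
  set T : Finset (Fin M) := Finset.univ.filter fun i => 1 / (1 + ρ * l i) ≤ δ with hT
  have hcard : T.card ≤ q := by
    by_contra hlt
    push Not at hlt
    have h1 : ∑ i, 1 / (1 + ρ * l i) ≤ ∑ i : Fin M, ((if i ∈ T then 0 else 1) + δ) := by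
      refine Finset.sum_le_sum fun i _ => ?_
      by_cases hi : i ∈ T
      · rw [if_pos hi]; simpa using (Finset.mem_filter.1 hi).2
      · rw [if_neg hi, div_le_iff₀ (hpos i)]
        nlinarith [mul_nonneg hρ.le (hl i)]
    have h2 : ∑ i : Fin M, ((if i ∈ T then (0 : ℝ) else 1) + δ) = (M : ℝ) - T.card + δ * M := by
      rw [Finset.sum_add_distrib]
      have : ∀ i, (if i ∈ T then (0 : ℝ) else 1) = 1 - if i ∈ T then 1 else 0 := by
        intro i; split_ifs <;> simp
      simp only [this, Finset.sum_sub_distrib]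
      simp
      ring
    have h3 : (q : ℝ) + 1 ≤ T.card := by exact_mod_cast hlt
    linarith
  set P : Matrix (Fin M) (Fin (q + 1)) ℂ := (1 : Matrix (Fin M) (Fin M) ℂ).submatrix id J' with hP
  have hPP : Pᴴ * P = 1 := by
    ext a b
    simp [hP, Matrix.mul_apply, Matrix.one_apply, hJ.eq_iff, eq_comm]
  have hHP : H.submatrix id J' = H * P := by
    ext a b
    simp [hP, Matrix.mul_apply, Matrix.one_apply]
  let f : (Fin (q + 1) → ℂ) →ₗ[ℂ] (T → ℂ) := ((Uᴴ * P).submatrix (fun i : T => i.1) id).mulVecLin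
  have hker : LinearMap.ker f ≠ ⊥ := by
    refine LinearMap.ker_ne_bot_of_finrank_lt ?_
    simp only [Module.finrank_fintype_fun_eq_card, Fintype.card_coe, Fintype.card_fin]
    omega
  obtain ⟨x, hx, hx0⟩ := (Submodule.ne_bot_iff _).1 hker
  refine ⟨x, hx0, fun i => ?_⟩
  have hxT : ∀ i ∈ T, (Uᴴ *ᵥ (P *ᵥ x)) i = 0 := by
    intro i hi
    have := congrFun (LinearMap.mem_ker.1 hx) ⟨i, hi⟩
    rw [mulVec_mulVec]
    exact this
  have hnorm : ∑ i, ‖(P *ᵥ x) i‖ ^ 2 = ∑ i, ‖x i‖ ^ 2 := by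
    have := sum_norm_sq_mulVec P x
    rw [hPP, one_mulVec, star_dotProduct_self] at this
    exact_mod_cast this
  have hsum : ∑ i, ‖(H *ᵥ (P *ᵥ x)) i‖ ^ 2 ≤ (1 / (δ * ρ)) * ∑ i, ‖x i‖ ^ 2 := by
    rw [sum_norm_sq_eq hH, ← hnorm, ← sum_norm_sq_unitary hU', Finset.mul_sum]
    refine Finset.sum_le_sum fun i _ => ?_
    by_cases hi : i ∈ T
    · rw [hxT i hi]; simp
    · refine mul_le_mul_of_nonneg_right ?_ (sq_nonneg _)
      have : δ < 1 / (1 + ρ * l i) := by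
        by_contra h
        exact hi (Finset.mem_filter.2 ⟨Finset.mem_univ _, not_lt.1 h⟩)
      rw [lt_div_iff₀ (hpos i)] at this
      rw [le_div_iff₀ (by positivity)]
      nlinarith
  have hx2 : ∑ i, ‖x i‖ ^ 2 ≤ (q + 1) * ‖x‖ ^ 2 := by
    calc _ ≤ ∑ _i : Fin (q + 1), ‖x‖ ^ 2 :=
          Finset.sum_le_sum fun i _ => by gcongr; exact norm_le_pi_norm x i
      _ = _ := by simp
  rw [hHP, ← mulVec_mulVec]
  refine abs_le_of_sq_le_sq' ?_ (by positivity) |>.2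
  rw [mul_pow, Real.sq_sqrt (by positivity)]
  calc _ ≤ ∑ i, ‖(H *ᵥ (P *ᵥ x)) i‖ ^ 2 :=
        Finset.single_le_sum (f := fun i => ‖(H *ᵥ (P *ᵥ x)) i‖ ^ 2)
          (fun i _ => sq_nonneg _) (Finset.mem_univ i)
    _ ≤ (1 / (δ * ρ)) * ((q + 1) * ‖x‖ ^ 2) :=
        hsum.trans (mul_le_mul_of_nonneg_left hx2 (by positivity))
    _ = _ := by ring

/-! ### Outage in terms of the mean-square errors -/

lemma one_add_sinr (M N : ℕ) (ρ : ℝ) (ω : Fin N × Fin M → ℝ × ℝ) (k : Fin M) :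
    1 + sinr M N ρ ω k = (mse ρ (chan M N ω) k)⁻¹ := by
  rw [sinr, mse, one_div]; ring

/-- By concavity of the logarithm, outage forces the trace of `(1 + ρ HᴴH)⁻¹` to be large. -/
lemma lt_sum_mse_of_outage {M N : ℕ} (hM : 1 ≤ M) {R ρ : ℝ} (hρ : 0 < ρ)
    (ω : Fin N × Fin M → ℝ × ℝ) (h : ∑ k : Fin M, Real.logb 2 (1 + sinr M N ρ ω k) < R) :
    (M : ℝ) * 2 ^ (-(R / M)) < ∑ k, mse ρ (chan M N ω) k := by
  have hM0 : (0 : ℝ) < M := by exact_mod_cast hM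
  set τ : ℝ := 2 ^ (-(R / M)) with hτ
  have hτ0 : 0 < τ := by positivity
  have hlog2 : 0 < Real.log 2 := Real.log_pos (by norm_num)
  have hlogτ : M * Real.log τ = -R * Real.log 2 := by
    rw [hτ, Real.log_rpow (by norm_num)]; field_simp
  have h1 : -∑ k, Real.log (mse ρ (chan M N ω) k) < R * Real.log 2 := by
    have : ∑ k : Fin M, Real.logb 2 (1 + sinr M N ρ ω k) =
        (-∑ k, Real.log (mse ρ (chan M N ω) k)) / Real.log 2 := by
      rw [← Finset.sum_neg_distrib, Finset.sum_div]
      refine Finset.sum_congr rfl fun k _ => ?_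
      rw [one_add_sinr, Real.logb, Real.log_inv]
    rwa [this, div_lt_iff₀ hlog2] at h
  have h2 : ∑ k, Real.log (mse ρ (chan M N ω) k) ≤
      ∑ k, (mse ρ (chan M N ω) k / τ - 1 + Real.log τ) := by
    refine Finset.sum_le_sum fun k _ => ?_
    have hp := mse_pos hρ (chan M N ω) k
    have := Real.log_le_sub_one_of_pos (div_pos hp hτ0)
    rw [Real.log_div hp.ne' hτ0.ne'] at this
    linarith
  rw [Finset.sum_add_distrib, Finset.sum_sub_distrib, ← Finset.sum_div] at h2
  simp only [Finset.sum_const, Finset.card_univ, Fintype.card_fin, nsmul_eq_mul, mul_one] at h2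
  rw [hlogτ] at h2
  have h3 : (M : ℝ) < (∑ k, mse ρ (chan M N ω) k) / τ := by linarith
  rwa [lt_div_iff₀ hτ0] at h3

lemma outage_of_lt_mse {M N : ℕ} (hM : 1 ≤ M) {R ρ : ℝ}
    (ω : Fin N × Fin M → ℝ × ℝ) (h : ∀ k, 2 ^ (-(R / M)) < mse ρ (chan M N ω) k) :
    ∑ k : Fin M, Real.logb 2 (1 + sinr M N ρ ω k) < R := by
  have hM0 : (0 : ℝ) < M := by exact_mod_cast hM
  have : Nonempty (Fin M) := ⟨⟨0, hM⟩⟩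
  calc _ < ∑ _k : Fin M, R / M := by
        refine Finset.sum_lt_sum_of_nonempty Finset.univ_nonempty fun k _ => ?_
        rw [one_add_sinr, Real.logb_inv]
        have h1 := Real.logb_lt_logb (b := 2) (by norm_num) (by positivity) (h k)
        rw [Real.logb_rpow (by norm_num) (by norm_num)] at h1
        linarith
    _ = R := by simp; field_simp

/-! ### The cross approximation as a function of the channel -/

section Centre
variable {M N p : ℕ} (I : Fin p → Fin N) (J : Fin p → Fin M)

/-- The entries of the cross approximation of the channel matrix, as pairs of reals. -/
def centre (ω : Fin N × Fin M → ℝ × ℝ) (b : Fin N × Fin M) : ℝ × ℝ :=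
  ((skel (chan M N ω) I J b.1 b.2).re, (skel (chan M N ω) I J b.1 b.2).im)

/-- The positions lying in neither a pivot row nor a pivot column. -/
def Free (b : Fin N × Fin M) : Prop := b.1 ∉ Set.range I ∧ b.2 ∉ Set.range J

lemma continuous_chan : Continuous (chan M N) := by
  refine continuous_matrix fun i j => ?_
  have : (fun ω => chan M N ω i j) = fun ω => Complex.equivRealProdCLM.symm (ω (i, j)) := by
    ext ω
    simp only [chan, toC, of_apply]
    rfl
  rw [this]
  fun_prop

lemma inv_eq_smul (A : Matrix (Fin p) (Fin p) ℂ) : A⁻¹ = A.det⁻¹ • A.adjugate := by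
  rw [inv_def, Ring.inverse_eq_inv']

lemma measurable_centre : Measurable (centre (M := M) (N := N) I J) := by
  have hinv : ∀ a b, Measurable fun ω => ((chan M N ω).submatrix I J)⁻¹ a b := by
    intro a b
    simp only [inv_eq_smul, Matrix.smul_apply, smul_eq_mul]
    have hc : Continuous fun ω => (chan M N ω).submatrix I J := continuous_chan.matrix_submatrix _ _
    exact (hc.matrix_det.measurable.inv).mul (hc.matrix_adjugate.matrix_elem a b).measurable
  have hent : ∀ i j, Measurable fun ω => chan M N ω i j := fun i j =>
    (continuous_chan.matrix_elem i j).measurable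
  refine measurable_pi_iff.2 fun b => ?_
  have hs : Measurable fun ω => skel (chan M N ω) I J b.1 b.2 := by
    simp only [skel, Matrix.mul_apply, submatrix_apply, id]
    refine Finset.measurable_sum _ fun a _ => ?_
    refine Measurable.mul (Finset.measurable_sum _ fun c _ => ?_) (hent _ _)
    exact (hent _ _).mul (hinv _ _)
  exact (Complex.measurable_re.comp hs).prodMk (Complex.measurable_im.comp hs)

lemma continuousAt_pivot_inv {ω₀ : Fin N × Fin M → ℝ × ℝ}
    (hd : ((chan M N ω₀).submatrix I J).det ≠ 0) :
    ContinuousAt (fun ω => ((chan M N ω).submatrix I J)⁻¹) ω₀ := by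
  simp only [inv_eq_smul]
  have hc : Continuous fun ω => (chan M N ω).submatrix I J := continuous_chan.matrix_submatrix _ _
  exact (hc.matrix_det.continuousAt.inv₀ hd).smul hc.matrix_adjugate.continuousAt

lemma continuousAt_matrix_mul {X l m n : Type*} [TopologicalSpace X] [Fintype m]
    {A : X → Matrix l m ℂ} {B : X → Matrix m n ℂ} {x : X} (hA : ContinuousAt A x)
    (hB : ContinuousAt B x) : ContinuousAt (fun x => A x * B x) x :=
  (Continuous.matrix_mul (A := fun p : Matrix l m ℂ × Matrix m n ℂ => p.1) (B := fun p => p.2)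
    continuous_fst continuous_snd).continuousAt.comp (hA.prodMk hB)

lemma continuousAt_skel {ω₀ : Fin N × Fin M → ℝ × ℝ}
    (hd : ((chan M N ω₀).submatrix I J).det ≠ 0) :
    ContinuousAt (fun ω => skel (chan M N ω) I J) ω₀ := by
  unfold skel
  have h1 : Continuous fun ω => (chan M N ω).submatrix id J := continuous_chan.matrix_submatrix _ _
  have h2 : Continuous fun ω => (chan M N ω).submatrix I id := continuous_chan.matrix_submatrix _ _
  exact continuousAt_matrix_mul (continuousAt_matrix_mul h1.continuousAt (continuousAt_pivot_inv I J hd))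
    h2.continuousAt

lemma skel_congr {ω ω' : Fin N × Fin M → ℝ × ℝ} (h : ∀ b, ¬ Free I J b → ω b = ω' b) :
    skel (chan M N ω) I J = skel (chan M N ω') I J := by
  have hrow : (chan M N ω).submatrix I id = (chan M N ω').submatrix I id := by
    ext a j
    simp [chan, h (I a, j) (fun hf => hf.1 ⟨a, rfl⟩)]
  have hcol : (chan M N ω).submatrix id J = (chan M N ω').submatrix id J := by
    ext i a
    simp [chan, h (i, J a) (fun hf => hf.2 ⟨a, rfl⟩)]
  have hpiv : (chan M N ω).submatrix I J = (chan M N ω').submatrix I J := by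
    ext a b
    simp [chan, h (I a, J b) (fun hf => hf.1 ⟨a, rfl⟩)]
  rw [skel, skel, hrow, hcol, hpiv]

lemma centre_congr {ω ω' : Fin N × Fin M → ℝ × ℝ} (h : ∀ b, ¬ Free I J b → ω b = ω' b)
    (b : Fin N × Fin M) : centre I J ω b = centre I J ω' b := by
  rw [centre, centre, skel_congr I J h]

lemma dist_centre_le (ω : Fin N × Fin M → ℝ × ℝ) (b : Fin N × Fin M) :
    dist (ω b) (centre I J ω b) ≤ ‖chan M N ω b.1 b.2 - skel (chan M N ω) I J b.1 b.2‖ := by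
  rw [Prod.dist_eq, Real.dist_eq, Real.dist_eq]
  exact max_le (Complex.abs_re_le_norm (chan M N ω b.1 b.2 - skel (chan M N ω) I J b.1 b.2))
    (Complex.abs_im_le_norm (chan M N ω b.1 b.2 - skel (chan M N ω) I J b.1 b.2))

lemma norm_sub_le_dist_centre (ω : Fin N × Fin M → ℝ × ℝ) (b : Fin N × Fin M) :
    ‖chan M N ω b.1 b.2 - skel (chan M N ω) I J b.1 b.2‖ ≤ 2 * dist (ω b) (centre I J ω b) := by
  rw [Prod.dist_eq, Real.dist_eq, Real.dist_eq]
  refine (Complex.norm_le_abs_re_add_abs_im _).trans ?_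
  rw [two_mul]
  exact add_le_add (le_max_left _ _) (le_max_right _ _)

open Classical in
lemma card_free (hI : Function.Injective I) (hJ : Function.Injective J) :
    Fintype.card {b // Free I J b} = (N - p) * (M - p) := by
  have e : {b // Free I J b} ≃ {i // i ∉ Set.range I} × {j // j ∉ Set.range J} :=
    Equiv.subtypeProdEquivProd (p := fun i => i ∉ Set.range I) (q := fun j => j ∉ Set.range J)
  rw [Fintype.card_congr e, Fintype.card_prod]
  have h1 : ∀ {n : ℕ} (f : Fin p → Fin n), Function.Injective f →
      Fintype.card {i // i ∉ Set.range f} = n - p := by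
    intro n f hf
    rw [Fintype.card_subtype_compl, Fintype.card_fin]
    congr 1
    have := Set.card_range_of_injective hf
    rw [Fintype.card_fin] at this
    exact this
  rw [h1 I hI, h1 J hJ]

end Centre

/-! ### Upper bound -/

lemma isProbabilityMeasure_matrixLaw (ι : Type*) [Fintype ι] :
    IsProbabilityMeasure (matrixLaw ι) := by
  unfold matrixLaw; infer_instance

/-- Outage is covered by finitely many tubes around the varieties `H = skel H I J`, one for each
choice of pivot. -/
lemma Pout_le {M N q : ℕ} (hM : 1 ≤ M) {R : ℝ}
    (hq : (M : ℝ) - q - 1 < (M : ℝ) * 2 ^ (-(R / M))) :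
    ∃ K : ℝ, 0 < K ∧ ∀ᶠ ρ : ℝ in atTop, Pout M N R ρ ≤ K * (ρ⁻¹) ^ ((N - q) * (M - q)) := by
  classical
  obtain ⟨K, hK, htube⟩ := tube_le (ι := Fin N × Fin M)
  have hM0 : (0 : ℝ) < M := by exact_mod_cast hM
  set m : ℝ := (M : ℝ) * 2 ^ (-(R / M)) with hm
  set δ : ℝ := (m - (M - q - 1)) / M with hδ
  have hδ0 : 0 < δ := div_pos (by linarith) hM0
  have hδm : (M : ℝ) - q - 1 + δ * M ≤ m := by rw [hδ]; field_simp; linarith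
  set L : ℝ := K * ((q + 1) ^ 2 * ((q + 1) / δ)) with hL
  have hL0 : 0 < L := by positivity
  let Ix := Σ p : Fin (q + 1), (Fin p → Fin N) × (Fin p → Fin M)
  refine ⟨(Fintype.card Ix) * L ^ ((N - q) * (M - q)) + 1, by positivity, ?_⟩
  filter_upwards [eventually_gt_atTop 0, eventually_ge_atTop L] with ρ hρ hρL
  set ε : ℝ := (q + 1) * Real.sqrt ((q + 1) / (δ * ρ)) with hε
  have hε0 : 0 ≤ ε := by positivity
  have hεsq : K * ε ^ 2 = L * ρ⁻¹ := by
    rw [hε, mul_pow, Real.sq_sqrt (by positivity), hL]; field_simp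
  have hx1 : L * ρ⁻¹ ≤ 1 := by
    rw [← div_eq_mul_inv]; exact (div_le_one hρ).2 hρL
  let S : Ix → Set (Fin N × Fin M → ℝ × ℝ) := fun x =>
    {ω | Function.Injective x.2.1 ∧ Function.Injective x.2.2 ∧
      ∀ b, Free x.2.1 x.2.2 b → dist (ω b) (centre x.2.1 x.2.2 ω b) ≤ ε}
  have hcover : {ω | ∑ k : Fin M, Real.logb 2 (1 + sinr M N ρ ω k) < R} ⊆ ⋃ x, S x := by
    intro ω hω
    have htr := lt_sum_mse_of_outage hM hρ ω hω
    obtain ⟨p, hp, I, J, hd, hsm⟩ := exists_small_schur (q := q) (chan M N ω)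
      (δ := Real.sqrt ((q + 1) / (δ * ρ))) (by positivity)
      (fun J' hJ' => exists_near_kernel hρ hδ0 hδm (chan M N ω) htr J' hJ')
    refine Set.mem_iUnion.2 ⟨⟨⟨p, Nat.lt_succ_of_le hp⟩, I, J⟩,
      (injective_of_det_ne_zero hd).1, (injective_of_det_ne_zero hd).2, fun b hb => ?_⟩
    exact (dist_centre_le I J ω b).trans (hsm b.1 b.2 hb.1 hb.2)
  have hS : ∀ x : Ix, matrixLaw (Fin N × Fin M) (S x) ≤
      ENNReal.ofReal ((L * ρ⁻¹) ^ ((N - q) * (M - q))) := by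
    rintro ⟨p, I, J⟩
    by_cases hIJ : Function.Injective I ∧ Function.Injective J
    · refine (measure_mono (fun ω hω => hω.2.2)).trans
        ((htube (Free I J) (centre I J) (measurable_centre I J)
          (fun ω ω' h b _ => centre_congr I J h b) ε hε0).trans ?_)
      rw [hεsq]
      refine ENNReal.ofReal_le_ofReal ?_
      have hcard := card_free I J hIJ.1 hIJ.2
      have : Fintype.card {b // Free I J b} = (N - p) * (M - p) := by
        rw [← hcard]
      rw [this]
      refine pow_le_pow_of_le_one (by positivity) hx1 ?_
      have := p.2
      exact Nat.mul_le_mul (by omega) (by omega)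
    · have : S ⟨p, I, J⟩ = ∅ := by
        ext ω
        simp only [Set.mem_empty_iff_false, iff_false]
        exact fun h => hIJ ⟨h.1, h.2.1⟩
      rw [this]; simp
  have hmeas : matrixLaw (Fin N × Fin M) {ω | ∑ k : Fin M, Real.logb 2 (1 + sinr M N ρ ω k) < R} ≤
      ENNReal.ofReal (Fintype.card Ix * (L * ρ⁻¹) ^ ((N - q) * (M - q))) := by
    refine (measure_mono hcover).trans ((measure_iUnion_fintype_le _ _).trans
      ((Finset.sum_le_sum fun x _ => hS x).trans (le_of_eq ?_)))
    rw [Finset.sum_const, nsmul_eq_mul, ENNReal.ofReal_mul (by positivity)]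
    simp
  have h1 : Pout M N R ρ ≤ Fintype.card Ix * (L * ρ⁻¹) ^ ((N - q) * (M - q)) :=
    ENNReal.toReal_le_of_le_ofReal (by positivity) hmeas
  have h2 : (0 : ℝ) ≤ (ρ⁻¹) ^ ((N - q) * (M - q)) := by positivity
  rw [mul_pow] at h1
  linarith

/-! ### Fourier test vectors -/

section Fourier
variable {M : ℕ} {ζ : ℂ}

lemma conj_root (hM : M ≠ 0) (hζ : IsPrimitiveRoot ζ M) : (starRingEnd ℂ) ζ = ζ⁻¹ := by
  have h1 : ‖ζ‖ = 1 := Complex.norm_eq_one_of_pow_eq_one hζ.pow_eq_one hM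
  rw [Complex.inv_def, Complex.normSq_eq_norm_sq, h1]; simp

lemma fourier_orthogonal (hM : M ≠ 0) (hζ : IsPrimitiveRoot ζ M) (i l : Fin M) :
    ∑ j : Fin M, ζ ^ (i * j : ℕ) * (starRingEnd ℂ) (ζ ^ (l * j : ℕ)) =
      if i = l then (M : ℂ) else 0 := by
  have hζ0 : ζ ≠ 0 := hζ.ne_zero hM
  have h1 : ∀ j : Fin M, ζ ^ (i * j : ℕ) * (starRingEnd ℂ) (ζ ^ (l * j : ℕ)) =
      (ζ ^ (i : ℕ) / ζ ^ (l : ℕ)) ^ (j : ℕ) := by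
    intro j
    rw [map_pow, conj_root hM hζ, pow_mul, pow_mul, ← mul_pow, inv_pow, div_eq_mul_inv]
  simp only [h1]
  split_ifs with h
  · subst h
    simp [div_self (pow_ne_zero _ hζ0)]
  · rw [Fin.sum_univ_eq_sum_range (fun j => (ζ ^ (i : ℕ) / ζ ^ (l : ℕ)) ^ j), geom_sum_eq]
    · rw [div_pow, ← pow_mul, ← pow_mul, mul_comm (i : ℕ), mul_comm (l : ℕ), pow_mul, pow_mul,
        hζ.pow_eq_one]
      simp
    · intro h2
      rw [div_eq_one_iff_eq (pow_ne_zero _ hζ0)] at h2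
      exact h (Fin.ext (hζ.pow_inj i.2 l.2 h2))

/-- `M` times the orthogonal projection of the `k`-th basis vector onto the span of the conjugates
of the Fourier vectors of index at least `q`. -/
def testVec (ζ : ℂ) (q : ℕ) (k j : Fin M) : ℂ :=
  ∑ l : Fin M, if q ≤ l then (starRingEnd ℂ) (ζ ^ (l * j : ℕ)) * ζ ^ (l * k : ℕ) else 0

lemma fourier_testVec (hM : M ≠ 0) (hζ : IsPrimitiveRoot ζ M) (q : ℕ) (k i : Fin M) :
    ∑ j : Fin M, ζ ^ (i * j : ℕ) * testVec ζ q k j =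
      if q ≤ i then (M : ℂ) * ζ ^ (i * k : ℕ) else 0 := by
  simp only [testVec, Finset.mul_sum]
  rw [Finset.sum_comm]
  have h : ∀ l : Fin M, ∑ j : Fin M, ζ ^ (i * j : ℕ) *
      (if q ≤ l then (starRingEnd ℂ) (ζ ^ (l * j : ℕ)) * ζ ^ (l * k : ℕ) else 0) =
      if i = l then (if q ≤ i then (M : ℂ) * ζ ^ (i * k : ℕ) else 0) else 0 := by
    intro l
    by_cases hl : q ≤ l
    · simp only [if_pos hl, ← mul_assoc]
      rw [← Finset.sum_mul, fourier_orthogonal hM hζ]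
      by_cases hil : i = l
      · subst hil; simp [hl]
      · simp [hil]
    · simp only [if_neg hl, mul_zero, Finset.sum_const_zero]
      by_cases hil : i = l
      · subst hil; simp [hl]
      · simp [hil]
  simp only [h]
  simp

lemma sum_ite_le (q : ℕ) (hq : q ≤ M) :
    ∑ l : Fin M, (if q ≤ (l : ℕ) then (1 : ℝ) else 0) = (M : ℝ) - q := by
  rw [Fin.sum_univ_eq_sum_range (fun l => if q ≤ l then (1 : ℝ) else 0), Finset.sum_boole]
  have : Finset.filter (fun l => q ≤ l) (Finset.range M) = Finset.Ico q M := by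
    ext l; simp; tauto
  rw [this, Nat.card_Ico, Nat.cast_sub hq]

lemma root_mul_conj (hM : M ≠ 0) (hζ : IsPrimitiveRoot ζ M) (n : ℕ) :
    (starRingEnd ℂ) (ζ ^ n) * ζ ^ n = 1 := by
  rw [map_pow, conj_root hM hζ, ← mul_pow, inv_mul_cancel₀ (hζ.ne_zero hM), one_pow]

lemma testVec_self (hM : M ≠ 0) (hζ : IsPrimitiveRoot ζ M) {q : ℕ} (hq : q ≤ M) (k : Fin M) :
    ‖testVec ζ q k k‖ = (M : ℝ) - q := by
  have : testVec ζ q k k = (((M : ℝ) - q : ℝ) : ℂ) := by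
    rw [← sum_ite_le q hq, testVec, Complex.ofReal_sum]
    refine Finset.sum_congr rfl fun l _ => ?_
    rw [root_mul_conj hM hζ]
    split_ifs <;> simp
  rw [this, Complex.norm_real, Real.norm_of_nonneg]
  exact sub_nonneg.2 (by exact_mod_cast hq)

lemma testVec_norm_sq (hM : M ≠ 0) (hζ : IsPrimitiveRoot ζ M) {q : ℕ} (hq : q ≤ M) (k : Fin M) :
    ∑ j, ‖testVec ζ q k j‖ ^ 2 = M * ((M : ℝ) - q) := by
  have : ((∑ j, ‖testVec ζ q k j‖ ^ 2 : ℝ) : ℂ) = ((M * ((M : ℝ) - q) : ℝ) : ℂ) := by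
    calc _ = ∑ j : Fin M, (∑ l : Fin M, if q ≤ l then ζ ^ (l * j : ℕ) * (starRingEnd ℂ) (ζ ^ (l * k : ℕ))
          else 0) * testVec ζ q k j := by
          rw [Complex.ofReal_sum]
          refine Finset.sum_congr rfl fun j _ => ?_
          rw [Complex.ofReal_pow, ← Complex.conj_mul']
          congr 1
          rw [testVec, map_sum]
          refine Finset.sum_congr rfl fun l _ => ?_
          split_ifs
          · rw [map_mul, Complex.conj_conj]
          · simp
      _ = ∑ l : Fin M, if q ≤ l then (starRingEnd ℂ) (ζ ^ (l * k : ℕ)) *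
            ∑ j : Fin M, ζ ^ (l * j : ℕ) * testVec ζ q k j else 0 := by
          simp only [Finset.sum_mul]
          rw [Finset.sum_comm]
          refine Finset.sum_congr rfl fun l _ => ?_
          split_ifs
          · rw [Finset.mul_sum]
            exact Finset.sum_congr rfl fun j _ => by ring
          · simp
      _ = ∑ l : Fin M, (((M : ℝ) * (if q ≤ (l : ℕ) then 1 else 0) : ℝ) : ℂ) := by
          refine Finset.sum_congr rfl fun l _ => ?_
          rw [fourier_testVec hM hζ]
          split_ifs
          · rw [mul_left_comm, root_mul_conj hM hζ]; simp
          · simp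
      _ = _ := by
          rw [← Complex.ofReal_sum, ← Finset.mul_sum, sum_ite_le q hq]
  exact_mod_cast this

end Fourier

/-! ### Lower bound -/

section Lower
variable {M N p : ℕ}

lemma schur_eq_zero {H : Matrix (Fin N) (Fin M) ℂ} {I : Fin p → Fin N} {J : Fin p → Fin M}
    (hd : (H.submatrix I J).det ≠ 0) (i : Fin N) (j : Fin M)
    (h : i ∈ Set.range I ∨ j ∈ Set.range J) : H i j - skel H I J i j = 0 := by
  have hu : IsUnit (H.submatrix I J).det := isUnit_iff_ne_zero.2 hd
  rcases h with ⟨a, rfl⟩ | ⟨a, rfl⟩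
  · have : skel H I J (I a) j =
        (H.submatrix I J * (H.submatrix I J)⁻¹ * H.submatrix I id) a j := rfl
    rw [this, mul_nonsing_inv _ hu, Matrix.one_mul]; simp
  · have : skel H I J i (J a) =
        (H.submatrix id J * (H.submatrix I J)⁻¹ * H.submatrix I J) i a := rfl
    rw [this, Matrix.mul_assoc, nonsing_inv_mul _ hu, Matrix.mul_one]; simp

/-- The vector `v` moved along the coordinates `J` so as to be annihilated by the rows `I` of `H`,
when the pivot block is nonsingular. -/
def corrected (H : Matrix (Fin N) (Fin M) ℂ) (I : Fin p → Fin N) (J : Fin p → Fin M)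
    (v : Fin M → ℂ) : Fin M → ℂ :=
  v - (1 : Matrix (Fin M) (Fin M) ℂ).submatrix id J *ᵥ
    ((H.submatrix I J)⁻¹ *ᵥ (H.submatrix I id *ᵥ v))

lemma mulVec_corrected (H : Matrix (Fin N) (Fin M) ℂ) (I : Fin p → Fin N) (J : Fin p → Fin M)
    (v : Fin M → ℂ) : H *ᵥ corrected H I J v = (H - skel H I J) *ᵥ v := by
  have hHP : H * (1 : Matrix (Fin M) (Fin M) ℂ).submatrix id J = H.submatrix id J := by
    ext a b
    simp [Matrix.mul_apply, Matrix.one_apply]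
  rw [corrected, mulVec_sub, sub_mulVec, mulVec_mulVec, hHP, mulVec_mulVec, mulVec_mulVec, skel]

lemma continuousAt_corrected (I : Fin p → Fin N) (J : Fin p → Fin M) (v : Fin M → ℂ)
    {ω₀ : Fin N × Fin M → ℝ × ℝ} (hd : ((chan M N ω₀).submatrix I J).det ≠ 0) :
    ContinuousAt (fun ω => corrected (chan M N ω) I J v) ω₀ := by
  unfold corrected
  have h2 : Continuous fun ω => (chan M N ω).submatrix I id := continuous_chan.matrix_submatrix _ _
  have h3 : ContinuousAt (fun ω => (1 : Matrix (Fin M) (Fin M) ℂ).submatrix id J *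
      ((chan M N ω).submatrix I J)⁻¹ * (chan M N ω).submatrix I id) ω₀ :=
    continuousAt_matrix_mul (continuousAt_matrix_mul continuousAt_const
      (continuousAt_pivot_inv I J hd)) h2.continuousAt
  have h4 : Continuous fun A : Matrix (Fin M) (Fin M) ℂ => A *ᵥ v :=
    continuous_id.matrix_mulVec continuous_const
  have h5 := h4.continuousAt.comp h3
  refine continuousAt_const.sub ?_
  simpa [Function.comp_def, mulVec_mulVec, Matrix.mul_assoc] using h5

/-- On the tube of radius `ε`, the channel `H` sends the corrected vector `v'` of `v` to a vector of
squared norm `O(ε²)`: the Schur complement vanishes off the free positions. -/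
lemma sum_norm_sq_corrected_le {I : Fin p → Fin N} {J : Fin p → Fin M}
    {ω : Fin N × Fin M → ℝ × ℝ} (hd : ((chan M N ω).submatrix I J).det ≠ 0) {ε : ℝ} (hε : 0 ≤ ε)
    (hω : ∀ b, Free I J b → dist (ω b) (centre I J ω b) ≤ ε) (v : Fin M → ℂ) {S : ℝ}
    (hS : ∑ j, ‖v j‖ ≤ S) :
    ∑ i, ‖(chan M N ω *ᵥ corrected (chan M N ω) I J v) i‖ ^ 2 ≤ N * (2 * ε * S) ^ 2 := by
  have hD : ∀ i j, ‖chan M N ω i j - skel (chan M N ω) I J i j‖ ≤ 2 * ε := by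
    intro i j
    by_cases hb : Free I J (i, j)
    · have h1 := norm_sub_le_dist_centre I J ω (i, j)
      have h2 := hω _ hb
      simp only at h1
      linarith
    · rw [schur_eq_zero hd i j (by simp only [Free, not_and_or, not_not] at hb; exact hb), norm_zero]
      positivity
  have hi : ∀ i, ‖(chan M N ω *ᵥ corrected (chan M N ω) I J v) i‖ ≤ 2 * ε * S := by
    intro i
    rw [mulVec_corrected, mulVec, dotProduct]
    calc _ ≤ ∑ j, 2 * ε * ‖v j‖ := by
          refine (norm_sum_le _ _).trans (Finset.sum_le_sum fun j _ => ?_)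
          rw [norm_mul]
          exact mul_le_mul_of_nonneg_right (hD i j) (norm_nonneg _)
      _ ≤ _ := by
          rw [← Finset.mul_sum]
          exact mul_le_mul_of_nonneg_left hS (by positivity)
  calc _ ≤ ∑ _i : Fin N, (2 * ε * S) ^ 2 :=
        Finset.sum_le_sum fun i _ => by gcongr; exact hi i
    _ = _ := by simp

set_option maxHeartbeats 400000 in
/-- A channel whose first `q` rows are Fourier vectors and whose other rows vanish has a kernel
onto which the basis vectors project with equal lengths; the points of a tube of radius `O(ρ^{-1/2})`
near it are in outage. -/
lemma le_Pout {q : ℕ} (hM : 1 ≤ M) (hqN : q ≤ N) {R : ℝ}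
    (hq : (M : ℝ) * 2 ^ (-(R / M)) < (M : ℝ) - q) :
    ∃ K : ℝ, 0 < K ∧ ∀ᶠ ρ : ℝ in atTop, K * (ρ⁻¹) ^ ((N - q) * (M - q)) ≤ Pout M N R ρ := by
  classical
  have hMne : M ≠ 0 := by omega
  have hM0 : (0 : ℝ) < M := by exact_mod_cast hM
  set τ : ℝ := 2 ^ (-(R / M)) with hτ
  have hτ0 : 0 < τ := by positivity
  have hqM : q ≤ M := by
    have : (q : ℝ) < M := by nlinarith
    exact_mod_cast this.le
  obtain ⟨ζ, hζ⟩ : ∃ ζ : ℂ, IsPrimitiveRoot ζ M := ⟨_, Complex.isPrimitiveRoot_exp M hMne⟩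
  let I : Fin q → Fin N := Fin.castLE hqN
  let J : Fin q → Fin M := Fin.castLE hqM
  have hIinj : Function.Injective I := Fin.castLE_injective hqN
  have hJinj : Function.Injective J := Fin.castLE_injective hqM
  have hIr : ∀ i : Fin N, i ∉ Set.range I → ¬ (i : ℕ) < q := fun i hi hlt => hi ⟨⟨i, hlt⟩, rfl⟩
  let h₀ : Fin N × Fin M → ℂ := fun b => if (b.1 : ℕ) < q then ζ ^ (b.1 * b.2 : ℕ) else 0
  let ω₀ : Fin N × Fin M → ℝ × ℝ := fun b => ((h₀ b).re, (h₀ b).im)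
  have hchan : ∀ i j, chan M N ω₀ i j = h₀ (i, j) := fun i j => rfl
  have hd : ((chan M N ω₀).submatrix I J).det ≠ 0 := by
    have : (chan M N ω₀).submatrix I J = vandermonde (fun a : Fin q => ζ ^ (a : ℕ)) := by
      ext a b
      rw [submatrix_apply, hchan, vandermonde_apply, ← pow_mul]
      simp [h₀, I, J]
    rw [this, det_vandermonde_ne_zero_iff]
    intro a b hab
    exact Fin.ext (hζ.pow_inj (a.2.trans_le hqM) (b.2.trans_le hqM) hab)
  have hcor0 : ∀ k, corrected (chan M N ω₀) I J (testVec ζ q k) = testVec ζ q k := by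
    intro k
    have : (chan M N ω₀).submatrix I id *ᵥ testVec ζ q k = 0 := by
      ext a
      have h1 := fourier_testVec hMne hζ q k (Fin.castLE hqM a)
      rw [if_neg (by simp)] at h1
      simp only [mulVec, dotProduct, submatrix_apply, id, hchan]
      rw [Pi.zero_apply, ← h1]
      refine Finset.sum_congr rfl fun j _ => ?_
      simp [h₀, I]
    rw [corrected, this, mulVec_zero, mulVec_zero, sub_zero]
  -- `κ` is the room left between `M - q` and `M · 2 ^ (-R / M)`.
  obtain ⟨κ, hκ, hκlt⟩ : ∃ κ : ℝ, 0 < κ ∧ τ * (M * ((M : ℝ) - q) + κ) < ((M : ℝ) - q) ^ 2 := by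
    have hpos : 0 < (M : ℝ) - q := by nlinarith
    have h1 : τ * (M * ((M : ℝ) - q)) < ((M : ℝ) - q) ^ 2 := by nlinarith
    refine ⟨(((M : ℝ) - q) ^ 2 - τ * (M * ((M : ℝ) - q))) / (2 * τ),
      div_pos (by linarith) (by positivity), ?_⟩
    have : τ * ((((M : ℝ) - q) ^ 2 - τ * (M * ((M : ℝ) - q))) / (2 * τ)) =
      (((M : ℝ) - q) ^ 2 - τ * (M * ((M : ℝ) - q))) / 2 := by field_simp
    rw [mul_add, this]; linarith
  have hevA : ∀ᶠ ω in nhds ω₀, ((chan M N ω).submatrix I J).det ≠ 0 ∧ ∀ k,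
      τ * (∑ j, ‖corrected (chan M N ω) I J (testVec ζ q k) j‖ ^ 2 + κ) <
        ‖corrected (chan M N ω) I J (testVec ζ q k) k‖ ^ 2 := by
    have hc : Continuous fun ω => (chan M N ω).submatrix I J :=
      continuous_chan.matrix_submatrix _ _
    refine (hc.matrix_det.continuousAt.eventually_ne hd).and (eventually_all.2 fun k => ?_)
    have hcv := continuousAt_corrected I J (testVec ζ q k) hd
    have hcj : ∀ j, ContinuousAt
        (fun ω => ‖corrected (chan M N ω) I J (testVec ζ q k) j‖ ^ 2) ω₀ := fun j =>
      (((continuous_apply j).continuousAt.comp hcv).norm).pow 2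
    have hL : ContinuousAt (fun ω =>
        τ * (∑ j, ‖corrected (chan M N ω) I J (testVec ζ q k) j‖ ^ 2 + κ)) ω₀ :=
      continuousAt_const.mul ((tendsto_finsetSum _ fun j _ => hcj j).add continuousAt_const)
    refine hL.eventually_lt (hcj k) ?_
    rw [hcor0, testVec_norm_sq hMne hζ hqM, testVec_self hMne hζ hqM]
    exact hκlt
  obtain ⟨η₁, hη₁, hball₁⟩ := Metric.eventually_nhds_iff.1 hevA
  have hcen0 : ∀ b, Free I J b → centre I J ω₀ b = 0 := by
    intro b hb
    have : skel (chan M N ω₀) I J b.1 b.2 = 0 := by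
      rw [skel, Matrix.mul_assoc, Matrix.mul_apply]
      refine Finset.sum_eq_zero fun a _ => ?_
      rw [submatrix_apply, hchan]
      simp [h₀, hIr _ hb.1]
    simp [centre, this]
  have hω0 : ∀ b, Free I J b → ω₀ b = 0 := by
    intro b hb
    simp [ω₀, h₀, hIr _ hb.1]
  have hevB : ∀ᶠ ω in nhds ω₀, ∀ b, Free I J b → ‖centre I J ω b‖ < min (η₁ / 2) 1 := by
    refine eventually_all.2 fun b => ?_
    by_cases hb : Free I J b
    · have hs : ContinuousAt (fun ω => skel (chan M N ω) I J b.1 b.2) ω₀ :=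
        (continuous_id.matrix_elem b.1 b.2).continuousAt.comp (continuousAt_skel I J hd)
      have hcc : ContinuousAt (fun ω => ‖centre I J ω b‖) ω₀ :=
        ((Complex.continuous_re.continuousAt.comp hs).prodMk
          (Complex.continuous_im.continuousAt.comp hs)).norm
      have : ‖centre I J ω₀ b‖ < min (η₁ / 2) 1 := by
        rw [hcen0 b hb, norm_zero]; positivity
      filter_upwards [hcc.eventually_lt_const this] with ω hω _ using hω
    · exact Eventually.of_forall fun ω h => absurd h hb
  obtain ⟨η₂, hη₂, hball₂⟩ := Metric.eventually_nhds_iff.1 hevB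
  set η : ℝ := min (η₁ / 2) (η₂ / 2) with hη
  have hη0 : 0 < η := by positivity
  have hηle1 : η ≤ η₁ / 2 := min_le_left _ _
  have hηle2 : η ≤ η₂ / 2 := min_le_right _ _
  -- The centre does not see the free coordinates, so these may be reset to their values at `ω₀`.
  have hcenbd : ∀ ω, (∀ b, ¬ Free I J b → dist (ω b) (ω₀ b) ≤ η) → ∀ b, Free I J b →
      ‖centre I J ω b‖ < min (η₁ / 2) 1 := by
    intro ω hω b hb
    let ω' : Fin N × Fin M → ℝ × ℝ := fun b => if Free I J b then ω₀ b else ω b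
    rw [centre_congr I J (ω' := ω') (fun b hb => by simp [ω', hb])]
    refine hball₂ ?_ b hb
    refine lt_of_le_of_lt ((dist_pi_le_iff hη0.le).2 fun b' => ?_) (by linarith : η < η₂)
    by_cases hb' : Free I J b'
    · simp [ω', hb', hη0.le]
    · simpa [ω', hb'] using hω b' hb'
  obtain ⟨K, hK, htube⟩ := tube_ge (Free I J) (centre I J) (measurable_centre I J)
    (fun ω ω' h b _ => centre_congr I J h b) ω₀ hη0
    (fun ω hω b hb => ((hcenbd ω hω b hb).trans_le (min_le_right _ _)).le)
  set S : ℝ := ∑ k : Fin M, ∑ j, ‖testVec ζ q k j‖ with hSdef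
  have hS0 : 0 ≤ S := Finset.sum_nonneg fun k _ => Finset.sum_nonneg fun j _ => norm_nonneg _
  have hS : ∀ k : Fin M, ∑ j, ‖testVec ζ q k j‖ ≤ S := fun k =>
    Finset.single_le_sum (f := fun k : Fin M => ∑ j, ‖testVec ζ q k j‖)
      (fun k _ => Finset.sum_nonneg fun j _ => norm_nonneg _) (Finset.mem_univ k)
  set t : ℝ := κ / (4 * (N + 1) * (S + 1) ^ 2) with ht
  have ht0 : 0 < t := by positivity
  have hcard : Fintype.card {b // Free I J b} = (N - q) * (M - q) := by
    rw [← card_free I J hIinj hJinj]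
  refine ⟨K * t ^ ((N - q) * (M - q)), by positivity, ?_⟩
  have hlim : Tendsto (fun ρ : ℝ => Real.sqrt (t * ρ⁻¹)) atTop (nhds 0) := by
    have h1 : Tendsto (fun ρ : ℝ => t * ρ⁻¹) atTop (nhds (t * 0)) :=
      tendsto_inv_atTop_zero.const_mul t
    have h2 := (Real.continuous_sqrt.tendsto (t * 0)).comp h1
    simpa [Function.comp_def] using h2
  filter_upwards [eventually_gt_atTop 0, hlim.eventually_lt_const
    (show (0 : ℝ) < min (η₁ / 2) 1 by positivity)] with ρ hρ hερ
  set ε : ℝ := Real.sqrt (t * ρ⁻¹) with hε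
  have hε0 : 0 ≤ ε := Real.sqrt_nonneg _
  have hεsq : ε ^ 2 = t * ρ⁻¹ := Real.sq_sqrt (by positivity)
  have hm := htube ε hε0 (hερ.trans_le (min_le_right _ _)).le
  rw [hcard, hεsq, mul_pow, ← mul_assoc] at hm
  have : IsProbabilityMeasure (matrixLaw (Fin N × Fin M)) := isProbabilityMeasure_matrixLaw _
  rw [Pout]
  refine (ENNReal.ofReal_le_iff_le_toReal (measure_ne_top _ _)).1
    (hm.trans (measure_mono fun ω hω => ?_))
  obtain ⟨hω1, hω2⟩ := hω
  have hωball : dist ω ω₀ < η₁ := by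
    refine (dist_pi_lt_iff hη₁).2 fun b => ?_
    by_cases hb : Free I J b
    · have h1 := hω2 b hb
      have h2 := (hcenbd ω hω1 b hb).trans_le (min_le_left _ _)
      have h3 := dist_triangle (ω b) (centre I J ω b) (ω₀ b)
      rw [hω0 b hb, dist_zero_right, dist_zero_right] at h3
      rw [hω0 b hb, dist_zero_right]
      have h4 := hερ.trans_le (min_le_left _ _)
      linarith
    · exact (hω1 b hb).trans_lt (by linarith)
  obtain ⟨hdω, hvω⟩ := hball₁ hωball
  refine outage_of_lt_mse hM ω fun k => ?_
  have h1 := norm_sq_le_mse hρ (chan M N ω) k (corrected (chan M N ω) I J (testVec ζ q k))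
  have h2 := sum_norm_sq_corrected_le hdω hε0 hω2 (testVec ζ q k) (hS k)
  have h3 : ρ * (N * (2 * ε * S) ^ 2) ≤ κ := by
    calc ρ * (N * (2 * ε * S) ^ 2) = 4 * N * S ^ 2 * (ρ * ε ^ 2) := by ring
      _ = 4 * N * S ^ 2 * t := by rw [hεsq]; field_simp
      _ ≤ 4 * (N + 1) * (S + 1) ^ 2 * t := by gcongr <;> linarith
      _ = κ := by rw [ht]; field_simp
  have h4 := hvω k
  set A := ∑ j, ‖corrected (chan M N ω) I J (testVec ζ q k) j‖ ^ 2
  set B := ∑ i, ‖(chan M N ω *ᵥ corrected (chan M N ω) I J (testVec ζ q k)) i‖ ^ 2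
  have hB : ρ * B ≤ κ := (mul_le_mul_of_nonneg_left h2 hρ.le).trans h3
  have hA0 : 0 ≤ A := Finset.sum_nonneg fun j _ => sq_nonneg _
  have hB0 : 0 ≤ B := Finset.sum_nonneg fun j _ => sq_nonneg _
  refine lt_of_mul_lt_mul_right (a := A + ρ * B) ?_
    (add_nonneg hA0 (mul_nonneg hρ.le hB0))
  calc τ * (A + ρ * B) ≤ τ * (A + κ) :=
        mul_le_mul_of_nonneg_left (add_le_add_right hB A) hτ0.le
    _ < _ := h4
    _ ≤ _ := h1

end Lower

/-! ### The exponent -/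

lemma tendsto_log_div_log {P : ℝ → ℝ} {d : ℕ} {K₁ K₂ : ℝ} (hK₁ : 0 < K₁)
    (h₁ : ∀ᶠ ρ : ℝ in atTop, K₁ * (ρ⁻¹) ^ d ≤ P ρ)
    (h₂ : ∀ᶠ ρ : ℝ in atTop, P ρ ≤ K₂ * (ρ⁻¹) ^ d) :
    Tendsto (fun ρ => Real.log (P ρ) / Real.log ρ) atTop (nhds (-(d : ℝ))) := by
  have hlim : ∀ K : ℝ, Tendsto (fun ρ : ℝ => Real.log K / Real.log ρ - d) atTop
      (nhds (-(d : ℝ))) := by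
    intro K
    have := (Real.tendsto_log_atTop.const_div_atTop (Real.log K)).sub_const (d : ℝ)
    simpa using this
  have hlog : ∀ K ρ : ℝ, 0 < K → 1 < ρ →
      Real.log K / Real.log ρ - d = Real.log (K * (ρ⁻¹) ^ d) / Real.log ρ := by
    intro K ρ hK hρ
    have h0 : (0 : ℝ) < ρ := by linarith
    have hl := Real.log_pos hρ
    rw [Real.log_mul hK.ne' (by positivity), Real.log_pow, Real.log_inv]
    field_simp
    ring
  refine tendsto_of_tendsto_of_tendsto_of_le_of_le' (hlim K₁) (hlim K₂) ?_ ?_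
  · filter_upwards [h₁, eventually_gt_atTop 1] with ρ hρ h1
    have h0 : (0 : ℝ) < ρ := by linarith
    rw [hlog K₁ ρ hK₁ h1]
    exact div_le_div_of_nonneg_right (Real.log_le_log (by positivity) hρ) (Real.log_pos h1).le
  · filter_upwards [h₁, h₂, eventually_gt_atTop 1] with ρ hρ hρ2 h1
    have h0 : (0 : ℝ) < ρ := by linarith
    have hP : 0 < P ρ := lt_of_lt_of_le (by positivity) hρ
    have hK₂ : 0 < K₂ := by
      have : 0 < K₂ * (ρ⁻¹) ^ d := hP.trans_le hρ2
      exact (pos_iff_pos_of_mul_pos this).2 (by positivity)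
    rw [hlog K₂ ρ hK₂ h1]
    exact div_le_div_of_nonneg_right (Real.log_le_log hP hρ2) (Real.log_pos h1).le

/-- If `q = min (M - ⌈M · 2 ^ (-R / M)⌉) N`, the exponent is the complex codimension of the
`N × M` matrices of rank at most `q`. -/
lemma dOut_eq {M N r : ℕ} {R : ℝ} (hrM : r ≤ M)
    (h1 : (r : ℝ) - 1 < (M : ℝ) * 2 ^ (-(R / M))) (h2 : (M : ℝ) * 2 ^ (-(R / M)) < r) :
    dOut R M N = (((N - min (M - r) N) * (M - min (M - r) N) : ℕ) : ℝ) := by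
  unfold dOut
  set m : ℝ := (M : ℝ) * 2 ^ (-(R / M)) with hm
  have hm0 : 0 ≤ m := by positivity
  have hrMr : (r : ℝ) ≤ M := by exact_mod_cast hrM
  rcases le_total (M - r) N with h | h
  · rw [min_eq_left h]
    have hc : ((N - (M - r) : ℕ) : ℝ) = N - (M - r) := by rw [Nat.cast_sub h, Nat.cast_sub hrM]
    have hc2 : ((M - (M - r) : ℕ) : ℝ) = r := by rw [Nat.sub_sub_self hrM]
    have h' : (M : ℝ) - r ≤ N := by
      have : ((M - r : ℕ) : ℝ) ≤ N := by exact_mod_cast h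
      rwa [Nat.cast_sub hrM] at this
    rw [Nat.cast_mul, hc, hc2]
    rcases le_total M N with hMN | hMN
    · have hMN' : (M : ℝ) ≤ N := by exact_mod_cast hMN
      have hceil : ⌈max (m - max ((M : ℝ) - N) 0) 0⌉ = (r : ℤ) := by
        rw [max_eq_right (by linarith : (M : ℝ) - N ≤ 0), sub_zero, max_eq_left hm0, Int.ceil_eq_iff]
        push_cast
        exact ⟨h1, h2.le⟩
      rw [hceil, abs_of_nonneg (by linarith)]
      push_cast; ring
    · have hMN' : (N : ℝ) ≤ M := by exact_mod_cast hMN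
      have hceil : ⌈max (m - max ((M : ℝ) - N) 0) 0⌉ = (r : ℤ) - (M - N) := by
        rw [max_eq_left (by linarith : (0 : ℝ) ≤ (M : ℝ) - N)]
        rcases h.eq_or_lt with he | hlt
        · have he' : (M : ℝ) - r = N := by
            rw [← Nat.cast_sub hrM]; exact_mod_cast he
          rw [max_eq_right (by linarith), Int.ceil_zero]
          omega
        · have hlt' : (M : ℝ) - r + 1 ≤ N := by
            rw [← Nat.cast_sub hrM]; exact_mod_cast hlt
          rw [max_eq_left (by linarith), Int.ceil_eq_iff]
          push_cast
          constructor <;> linarith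
      rw [hceil, abs_of_nonpos (by linarith)]
      push_cast; ring
  · rw [min_eq_right h]
    have h' : (N : ℝ) ≤ M - r := by rw [← Nat.cast_sub hrM]; exact_mod_cast h
    have hceil : ⌈max (m - max ((M : ℝ) - N) 0) 0⌉ = 0 := by
      rw [max_eq_right, Int.ceil_zero]
      have := le_max_left ((M : ℝ) - N) 0
      linarith
    rw [hceil]; simp

/-- For every rate `R > 0` such that `M·2^{−R/M}` is not a positive integer, the MMSE
outage probability is exponentially equal to `ρ^{−d_out(R,M,N)}`:
`lim_{ρ→∞} log P_out(ρ) / log ρ = −d_out(R,M,N)`; the diversity gain of the MMSE MIMO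
receiver at fixed rate `R` is exactly `d_out(R,M,N)`. -/
theorem mmse_outage_exponent (M N : ℕ) (hM : 1 ≤ M) (hN : 1 ≤ N)
    (R : ℝ) (hR : 0 < R)
    (hnonint : ∀ n : ℕ, 0 < n → (M : ℝ) * 2 ^ (-(R / M)) ≠ n) :
    Tendsto (fun ρ : ℝ => Real.log (Pout M N R ρ) / Real.log ρ) atTop
      (nhds (-dOut R M N)) := by
  have hM0 : (0 : ℝ) < M := by exact_mod_cast hM
  set r : ℕ := ⌈(M : ℝ) * 2 ^ (-(R / M))⌉₊ with hr
  have hm0 : 0 < (M : ℝ) * 2 ^ (-(R / M)) := by positivity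
  have hr0 : 0 < r := Nat.ceil_pos.2 hm0
  have h1 : (r : ℝ) - 1 < (M : ℝ) * 2 ^ (-(R / M)) := by
    have := Nat.ceil_lt_add_one hm0.le
    linarith
  have h2 : (M : ℝ) * 2 ^ (-(R / M)) < r := lt_of_le_of_ne (Nat.le_ceil _) (hnonint r hr0)
  have hrM : r ≤ M := by
    refine Nat.ceil_le.2 (mul_le_of_le_one_right hM0.le ?_)
    exact Real.rpow_le_one_of_one_le_of_nonpos (by norm_num) (neg_nonpos.2 (by positivity))
  rw [dOut_eq hrM h1 h2]
  set q := min (M - r) N with hqdef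
  have hq : (q : ℝ) ≤ M - r := by
    rw [← Nat.cast_sub hrM]; exact_mod_cast min_le_left _ _
  obtain ⟨K₁, hK₁, hlow⟩ := le_Pout (q := q) hM (min_le_right (M - r) N)
    (show (M : ℝ) * 2 ^ (-(R / M)) < M - q by linarith)
  rcases le_total (M - r) N with h | h
  · have hq' : (q : ℝ) = M - r := by rw [hqdef, min_eq_left h, Nat.cast_sub hrM]
    obtain ⟨K₂, hK₂, hup⟩ := Pout_le (M := M) (N := N) (q := q) hM (R := R) (by linarith)
    exact tendsto_log_div_log hK₁ hlow hup
  · -- The exponent vanishes and the upper bound is that a probability is at most `1`.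
    refine tendsto_log_div_log (K₂ := 1) hK₁ hlow (Eventually.of_forall fun ρ => ?_)
    have hqN : q = N := min_eq_right h
    have := isProbabilityMeasure_matrixLaw (Fin N × Fin M)
    rw [hqN, Nat.sub_self, zero_mul, pow_zero, mul_one]
    exact ENNReal.toReal_le_of_le_ofReal zero_le_one (by simpa using prob_le_one)

end
end
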